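/- arXiv:1403.6521 — 4 statements merged into one kernel-verified Lean document; each statement's English description precedes it below -/
import Mathlib

section
/- Let d_0 := n(q^m−1). For every composition α of n and every 0 ≤ i ≤ d_0, the F_q-dimension of the P_α-fixed subspace of the degree-i component Q_i equals the F_q-dimension of the P_α-cofixed quotient of the degree-(d_0−i) component Q_{d_0−i}; that is, dim_{F_q} (Q_i)^{P_α} = dim_{F_q} (Q_{d_0−i})_{P_α}. -/
open Finset Matrix MvPolynomial

/-- Partial sums: `psum f i = f 0 + f 1 + ⋯ + f (i-1)`. -/
def psum (f : ℕ → ℕ) (i : ℕ) : ℕ := ∑ j ∈ Finset.range i, f j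

/-- The action of a matrix `g` on `F_q[x_1,…,x_n]` by linear substitution of the variables:
`x_i ↦ Σ_j g_{ij} x_j`. -/
noncomputable def lsub {n : ℕ} {Fq : Type} [Field Fq] (g : Matrix (Fin n) (Fin n) Fq) :
    MvPolynomial (Fin n) Fq →ₐ[Fq] MvPolynomial (Fin n) Fq :=
  MvPolynomial.aeval fun i => ∑ j, MvPolynomial.C (g i j) * MvPolynomial.X j

/-- The parabolic subgroup `P_α ⊆ GL_n(F_q)` of invertible block upper-triangular matrices with
diagonal blocks of sizes `α_0, …, α_{ℓ-1}`: the entry in row `r`, column `s` vanishes whenever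
`s < A_i ≤ r` for some partial sum `A_i` of `α`. -/
def Pa (Fq : Type) [Field Fq] (n ℓ : ℕ) (α : ℕ → ℕ) : Set (GL (Fin n) Fq) :=
  {g | ∀ r s : Fin n, ∀ i ≤ ℓ, (s : ℕ) < psum α i → psum α i ≤ (r : ℕ) →
        (g : Matrix (Fin n) (Fin n) Fq) r s = 0}

/-- The Frobenius power `𝔪^{[Q]} = (x_1^Q, …, x_n^Q)` of the irrelevant ideal, as an
`F_q`-submodule of `F_q[x_1,…,x_n]`. -/
noncomputable def frobPow (Fq : Type) [Field Fq] (n Q : ℕ) :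
    Submodule Fq (MvPolynomial (Fin n) Fq) :=
  Submodule.restrictScalars Fq
    (Ideal.span (Set.range fun i : Fin n => (MvPolynomial.X i : MvPolynomial (Fin n) Fq) ^ Q))

/-- The space of degree-`d` homogeneous polynomials `f` whose class in `S/𝔪^{[Q]}` is fixed
by every element of `H`, i.e. `g(f) − f ∈ 𝔪^{[Q]}` for all `g ∈ H`. -/
noncomputable def fixDeg (Fq : Type) [Field Fq] (n Q : ℕ) (H : Set (GL (Fin n) Fq)) (d : ℕ) :
    Submodule Fq (MvPolynomial (Fin n) Fq) :=
  MvPolynomial.homogeneousSubmodule (Fin n) Fq d ⊓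
    ⨅ g ∈ H,
      Submodule.comap
        ((lsub ((g : GL (Fin n) Fq) : Matrix (Fin n) (Fin n) Fq)).toLinearMap - LinearMap.id)
        (frobPow Fq n Q)

/-- The degree-`d` homogeneous component `Q_d` of `Q = S/𝔪^{[Q]}` (image of the degree-`d`
homogeneous polynomials). -/
noncomputable def Qdeg (Fq : Type) [Field Fq] (n Q d : ℕ) :
    Submodule Fq (MvPolynomial (Fin n) Fq ⧸ frobPow Fq n Q) :=
  Submodule.map (frobPow Fq n Q).mkQ (MvPolynomial.homogeneousSubmodule (Fin n) Fq d)

/-- The span of `{g(x) − x : g ∈ H, x ∈ Q_d}` inside `Q = S/𝔪^{[Q]}`. -/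
noncomputable def Ncof (Fq : Type) [Field Fq] (n Q : ℕ) (H : Set (GL (Fin n) Fq)) (d : ℕ) :
    Submodule Fq (MvPolynomial (Fin n) Fq ⧸ frobPow Fq n Q) :=
  Submodule.span Fq
    {y | ∃ g ∈ H, ∃ f ∈ MvPolynomial.homogeneousSubmodule (Fin n) Fq d,
      y = (frobPow Fq n Q).mkQ
            (lsub ((g : GL (Fin n) Fq) : Matrix (Fin n) (Fin n) Fq) f - f)}

/-!
The algebra `Q = S/𝔪^{[q^m]}` satisfies Poincaré duality: taking the coefficient of the socle
monomial `(x_1 ⋯ x_n)^{q^m - 1}` in a product gives a perfect pairing of `Q_i` with `Q_{d₀-i}`.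
For `f` homogeneous of degree `d₀ = n(q^m - 1)`, with `m > 0`, and `K` the field with `q^m`
elements, this coefficient is `(-1)^n ∑_{a ∈ K^n} f(a)`, and the sum does not change under linear
substitutions because `GL_n(F_q)` permutes `K^n`. For an invariant perfect pairing, the vectors
fixed by a set of group elements `g` form the orthogonal complement of the span of all `g(x) - x`.
-/

section PerfectPairing

theorem finrank_eq_finrank_quotient_of_isPerfPair {K V W : Type*} [Field K]
    [AddCommGroup V] [Module K V] [AddCommGroup W] [Module K W]
    (p : V →ₗ[K] W →ₗ[K] K) [p.IsPerfPair] {F : Submodule K V} {N : Submodule K W}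
    (hF : ∀ x, x ∈ F ↔ ∀ y ∈ N, p x y = 0) :
    Module.finrank K F = Module.finrank K (W ⧸ N) := by
  have hmap : F.map (p.toPerfPair : V →ₗ[K] Module.Dual K W) = N.dualAnnihilator := by
    ext φ
    obtain ⟨x, rfl⟩ := p.toPerfPair.surjective φ
    rw [Submodule.mem_map_equiv, LinearEquiv.symm_apply_apply, Submodule.mem_dualAnnihilator]
    exact hF x
  calc Module.finrank K F
      = Module.finrank K N.dualAnnihilator := by rw [← hmap, LinearEquiv.finrank_map_eq]
    _ = Module.finrank K (Module.Dual K (W ⧸ N)) := N.dualQuotEquivDualAnnihilator.finrank_eq.symm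
    _ = Module.finrank K (W ⧸ N) := Subspace.dual_finrank_eq

end PerfectPairing

section SocleExponent

variable {σ : Type*} [Fintype σ]

variable (σ) in
/-- The exponent `(Q - 1, …, Q - 1)` of the monomial that spans the socle of the quotient of the
polynomial ring in the variables `σ` by the `Q`-th powers of the variables. -/
noncomputable def socleExponent (Q : ℕ) : σ →₀ ℕ :=
  Finsupp.equivFunOnFinite.symm fun _ => Q - 1

@[simp]
theorem socleExponent_apply (Q : ℕ) (k : σ) : socleExponent σ Q k = Q - 1 := rfl

theorem degree_socleExponent (Q : ℕ) :
    (socleExponent σ Q).degree = Fintype.card σ * (Q - 1) := by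
  simp [Finsupp.degree_eq_sum]

theorem exists_lt_of_degree_le_of_ne_socleExponent {Q : ℕ} {e : σ →₀ ℕ}
    (hdeg : e.degree ≤ Fintype.card σ * (Q - 1)) (hne : e ≠ socleExponent σ Q) :
    ∃ k, e k < Q - 1 := by
  by_contra! hle
  obtain ⟨r, rfl⟩ := exists_add_of_le (show socleExponent σ Q ≤ e from hle)
  rw [map_add, degree_socleExponent] at hdeg
  have hr : r = 0 := (Finsupp.degree_eq_zero_iff r).mp (by omega)
  exact hne (by rw [hr, add_zero])

end SocleExponent

section SumOverPoints

variable {K σ : Type*} [Field K] [Fintype K] [Fintype σ] [DecidableEq σ]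

theorem sum_pow_card_sub_one (K : Type*) [Field K] [Fintype K] :
    ∑ a : K, a ^ (Fintype.card K - 1) = -1 := by
  classical
  have hpow (a : K) (ha : a ∈ univ.erase 0) : a ^ (Fintype.card K - 1) = 1 :=
    FiniteField.pow_card_sub_one_eq_one a (ne_of_mem_erase ha)
  have hcard : Fintype.card K - 1 ≠ 0 := (Nat.sub_pos_of_lt Fintype.one_lt_card).ne'
  rw [← add_sum_erase _ _ (mem_univ 0), zero_pow hcard, sum_congr rfl hpow]
  simp [card_erase_of_mem, Nat.cast_pred Fintype.card_pos]

theorem sum_prod_pow_eq_ite {e : σ →₀ ℕ}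
    (he : e.degree ≤ Fintype.card σ * (Fintype.card K - 1)) :
    ∑ x : σ → K, ∏ k, x k ^ e k =
      if e = socleExponent σ (Fintype.card K) then (-1) ^ Fintype.card σ else 0 := by
  rw [← Fintype.prod_sum fun k (a : K) => a ^ e k]
  split_ifs with h
  · simp [h, sum_pow_card_sub_one]
  · obtain ⟨k, hk⟩ := exists_lt_of_degree_le_of_ne_socleExponent he h
    exact prod_eq_zero (mem_univ k) (FiniteField.sum_pow_lt_card_sub_one K _ hk)

/-- The boundary case of the vanishing statement `MvPolynomial.sum_eval_eq_zero`. -/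
theorem sum_aeval_eq_neg_one_pow_mul_coeff {R : Type*} [CommRing R] [Algebra R K]
    {f : MvPolynomial σ R} (hf : f.totalDegree ≤ Fintype.card σ * (Fintype.card K - 1)) :
    ∑ x : σ → K, aeval x f =
      (-1) ^ Fintype.card σ * algebraMap R K (coeff (socleExponent σ (Fintype.card K)) f) := by
  have hdeg {e : σ →₀ ℕ} (he : e ∈ f.support) :
      e.degree ≤ Fintype.card σ * (Fintype.card K - 1) :=
    (le_totalDegree he).trans hf
  calc ∑ x : σ → K, aeval x f
      = ∑ e ∈ f.support, algebraMap R K (coeff e f) * ∑ x : σ → K, ∏ k, x k ^ e k := by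
        simp only [aeval_def, eval₂_eq', mul_sum]
        exact sum_comm
    _ = ∑ e ∈ f.support, if e = socleExponent σ (Fintype.card K) then
          (-1) ^ Fintype.card σ * algebraMap R K (coeff e f) else 0 := by
        refine sum_congr rfl fun e he => ?_
        rw [sum_prod_pow_eq_ite (hdeg he), mul_ite, mul_zero, mul_comm]
    _ = (-1) ^ Fintype.card σ * algebraMap R K (coeff (socleExponent σ (Fintype.card K)) f) := by
        rw [sum_ite_eq']
        split_ifs with h
        · rfl
        · rw [notMem_support_iff.mp h, map_zero, mul_zero]

end SumOverPoints

section LinearSubstitution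

variable {Fq : Type} [Field Fq] {n : ℕ}

theorem isHomogeneous_lsub (g : Matrix (Fin n) (Fin n) Fq) {d : ℕ}
    {f : MvPolynomial (Fin n) Fq} (hf : f.IsHomogeneous d) : (lsub g f).IsHomogeneous d := by
  have hlin (i : Fin n) :
      (∑ j, C (g i j) * X j : MvPolynomial (Fin n) Fq).IsHomogeneous 1 :=
    IsHomogeneous.sum _ _ _ fun j _ => (isHomogeneous_X Fq j).C_mul (g i j)
  rw [lsub, ← one_mul d]
  exact hf.aeval _ hlin

theorem aeval_lsub {A : Type*} [CommSemiring A] [Algebra Fq A] (g : Matrix (Fin n) (Fin n) Fq)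
    (x : Fin n → A) (f : MvPolynomial (Fin n) Fq) :
    aeval x (lsub g f) = aeval (g.map (algebraMap Fq A) *ᵥ x) f := by
  have hcomp : (aeval x).comp (lsub g) = aeval (g.map (algebraMap Fq A) *ᵥ x) := by
    ext i
    simp [lsub, mulVec, dotProduct]
  exact DFunLike.congr_fun hcomp f

theorem lsub_lsub_inv (g : GL (Fin n) Fq) (f : MvPolynomial (Fin n) Fq) :
    lsub (g : Matrix (Fin n) (Fin n) Fq) (lsub ((g⁻¹ : GL (Fin n) Fq) : Matrix _ _ Fq) f) = f := by
  have hlsub : lsub (g : Matrix (Fin n) (Fin n) Fq) =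
      aeval ((g : Matrix (Fin n) (Fin n) Fq).map (algebraMap Fq (MvPolynomial (Fin n) Fq)) *ᵥ X) :=
    rfl
  rw [hlsub, aeval_lsub, mulVec_mulVec, ← Matrix.map_mul, ← Units.val_mul, inv_mul_cancel,
    Units.val_one, Matrix.map_one _ (map_zero _) (map_one _), one_mulVec, aeval_X_left_apply]

theorem sum_aeval_lsub (K : Type*) [Field K] [Fintype K] [Algebra Fq K] (g : GL (Fin n) Fq)
    (f : MvPolynomial (Fin n) Fq) :
    ∑ x : Fin n → K, aeval x (lsub (g : Matrix (Fin n) (Fin n) Fq) f) =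
      ∑ x : Fin n → K, aeval x f := by
  have hunit : IsUnit ((g : Matrix (Fin n) (Fin n) Fq).map (algebraMap Fq K)) :=
    (GeneralLinearGroup.map (algebraMap Fq K) g).isUnit
  have hbij := Finite.injective_iff_bijective.mp (mulVec_injective_of_isUnit hunit)
  simp only [aeval_lsub]
  exact hbij.sum_comp fun x => aeval x f

theorem exists_algebra_card_eq_pow (k : Type*) [Field k] [Fintype k] (m : ℕ) [NeZero m] :
    ∃ (K : Type) (_ : Field K) (_ : Fintype K) (_ : Algebra k K),
      Fintype.card K = Fintype.card k ^ m := by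
  obtain ⟨p, _⟩ := CharP.exists k
  have : Fact p.Prime := ⟨CharP.char_is_prime k p⟩
  let _ := Fintype.ofFinite (FiniteField.Extension k p m)
  refine ⟨FiniteField.Extension k p m, inferInstance, inferInstance, inferInstance, ?_⟩
  simpa only [Nat.card_eq_fintype_card] using FiniteField.natCard_extension k p m

theorem coeff_socleExponent_lsub [Fintype Fq] (m : ℕ) (g : GL (Fin n) Fq)
    {f : MvPolynomial (Fin n) Fq} (hf : f.IsHomogeneous (n * (Fintype.card Fq ^ m - 1))) :
    coeff (socleExponent (Fin n) (Fintype.card Fq ^ m)) (lsub (g : Matrix (Fin n) (Fin n) Fq) f) =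
      coeff (socleExponent (Fin n) (Fintype.card Fq ^ m)) f := by
  obtain rfl | hm := eq_or_ne m 0
  · have hC : f = C (coeff 0 f) :=
      totalDegree_eq_zero_iff_eq_C.mp (Nat.le_zero.mp (by simpa using hf.totalDegree_le))
    rw [hC]
    exact congrArg _ ((lsub _).commutes _)
  · have : NeZero m := ⟨hm⟩
    obtain ⟨K, _, _, _, hK⟩ := exists_algebra_card_eq_pow Fq m
    rw [← hK] at hf ⊢
    have hdeg {h : MvPolynomial (Fin n) Fq} (hh : h.IsHomogeneous (n * (Fintype.card K - 1))) :
        h.totalDegree ≤ Fintype.card (Fin n) * (Fintype.card K - 1) := by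
      simpa only [Fintype.card_fin] using hh.totalDegree_le
    have hsum := sum_aeval_lsub K g f
    rw [sum_aeval_eq_neg_one_pow_mul_coeff (hdeg hf),
      sum_aeval_eq_neg_one_pow_mul_coeff (hdeg (isHomogeneous_lsub _ hf))] at hsum
    exact (algebraMap Fq K).injective (mul_left_cancel₀ (by simp) hsum)

end LinearSubstitution

section SoclePairing

variable {Fq : Type} [Field Fq] {n Q : ℕ}

theorem mem_frobPow_iff {f : MvPolynomial (Fin n) Fq} :
    f ∈ frobPow Fq n Q ↔ ∀ e ∈ f.support, ∃ k, Q ≤ e k := by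
  have hgen : (Set.range fun k : Fin n => (X k : MvPolynomial (Fin n) Fq) ^ Q) =
      (fun e => monomial e (1 : Fq)) '' Set.range fun k : Fin n => Finsupp.single k Q := by
    rw [← Set.range_comp]
    exact congrArg Set.range (funext fun k => X_pow_eq_monomial)
  rw [frobPow, Submodule.restrictScalars_mem, hgen, mem_ideal_span_monomial_image]
  simp

theorem mul_mem_frobPow_right {f : MvPolynomial (Fin n) Fq} (hf : f ∈ frobPow Fq n Q)
    (b : MvPolynomial (Fin n) Fq) : f * b ∈ frobPow Fq n Q :=
  Ideal.mul_mem_right b (Ideal.span _) hf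

theorem coeff_socleExponent_eq_zero_of_mem_frobPow [NeZero Q] {f : MvPolynomial (Fin n) Fq}
    (hf : f ∈ frobPow Fq n Q) : coeff (socleExponent (Fin n) Q) f = 0 := by
  by_contra h
  obtain ⟨k, hk⟩ := mem_frobPow_iff.mp hf _ (mem_support_iff.mpr h)
  exact absurd hk (Nat.not_le_of_lt (Nat.sub_one_lt (NeZero.ne Q)))

theorem mem_frobPow_of_forall_coeff_mul_eq_zero {i j : ℕ} (hij : i + j = n * (Q - 1))
    {f : MvPolynomial (Fin n) Fq} (hf : f.IsHomogeneous i)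
    (h : ∀ b : MvPolynomial (Fin n) Fq, b.IsHomogeneous j →
      coeff (socleExponent (Fin n) Q) (f * b) = 0) :
    f ∈ frobPow Fq n Q := by
  rw [mem_frobPow_iff]
  intro e he
  by_contra! hlt
  have hle : e ≤ socleExponent (Fin n) Q := fun k => Nat.le_sub_one_of_lt (hlt k)
  obtain ⟨c, hc⟩ := exists_add_of_le hle
  have hdeg : c.degree = j := by
    have hsum := congrArg Finsupp.degree hc
    have hei : e.degree = i := by
      by_contra hne
      exact mem_support_iff.mp he (hf.coeff_eq_zero hne)
    rw [map_add, degree_socleExponent, Fintype.card_fin, hei] at hsum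
    omega
  have hcoeff := h (monomial c 1) (isHomogeneous_monomial 1 hdeg)
  rw [hc, coeff_mul_monomial, mul_one] at hcoeff
  exact mem_support_iff.mp he hcoeff

variable (Fq n Q) in
/-- The Poincaré duality pairing on `S/𝔪^{[Q]}`: two classes are sent to the coefficient of the
socle monomial `(x_1 ⋯ x_n)^{Q-1}` in their product. For `Q = 0` this would not be well defined,
since truncated subtraction makes the exponent `Q - 1` equal to `0`. -/
noncomputable def soclePairing [NeZero Q] :
    LinearMap.BilinForm Fq (MvPolynomial (Fin n) Fq ⧸ frobPow Fq n Q) :=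
  LinearMap.liftQ₂ (frobPow Fq n Q) (frobPow Fq n Q)
    ((LinearMap.mul Fq (MvPolynomial (Fin n) Fq)).compr₂ (lcoeff Fq (socleExponent (Fin n) Q)))
    (fun _ hf => LinearMap.ext fun b =>
      coeff_socleExponent_eq_zero_of_mem_frobPow (mul_mem_frobPow_right hf b))
    (fun _ hf => LinearMap.ext fun b =>
      (congrArg _ (mul_comm _ _)).trans
        (coeff_socleExponent_eq_zero_of_mem_frobPow (mul_mem_frobPow_right hf b)))

variable [NeZero Q]

theorem soclePairing_mkQ_mkQ (f b : MvPolynomial (Fin n) Fq) :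
    soclePairing Fq n Q ((frobPow Fq n Q).mkQ f) ((frobPow Fq n Q).mkQ b) =
      coeff (socleExponent (Fin n) Q) (f * b) := rfl

theorem soclePairing_comm (x y : MvPolynomial (Fin n) Fq ⧸ frobPow Fq n Q) :
    soclePairing Fq n Q x y = soclePairing Fq n Q y x := by
  obtain ⟨f, rfl⟩ := (frobPow Fq n Q).mkQ_surjective x
  obtain ⟨b, rfl⟩ := (frobPow Fq n Q).mkQ_surjective y
  rw [soclePairing_mkQ_mkQ, soclePairing_mkQ_mkQ, mul_comm]

theorem eq_zero_of_forall_soclePairing_eq_zero {i j : ℕ} (hij : i + j = n * (Q - 1))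
    {x : MvPolynomial (Fin n) Fq ⧸ frobPow Fq n Q} (hx : x ∈ Qdeg Fq n Q i)
    (h : ∀ y ∈ Qdeg Fq n Q j, soclePairing Fq n Q x y = 0) : x = 0 := by
  obtain ⟨f, hf, rfl⟩ := hx
  refine (Submodule.Quotient.mk_eq_zero _).mpr ?_
  exact mem_frobPow_of_forall_coeff_mul_eq_zero hij hf fun b hb =>
    h _ (Submodule.mem_map_of_mem hb)

theorem isPerfPair_soclePairing {i j : ℕ} (hij : i + j = n * (Q - 1)) :
    ((soclePairing Fq n Q).domRestrict₁₂ (Qdeg Fq n Q i) (Qdeg Fq n Q j)).IsPerfPair := by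
  have : FiniteDimensional Fq (Qdeg Fq n Q i) :=
    Module.Finite.iff_fg.mpr ((homogeneousSubmodule_fg (σ := Fin n) (R := Fq) i).map _)
  refine .of_injective ((injective_iff_map_eq_zero _).mpr fun x hx => ?_)
    ((injective_iff_map_eq_zero _).mpr fun y hy => ?_)
  · exact Subtype.ext (eq_zero_of_forall_soclePairing_eq_zero hij x.2 fun y hy =>
      LinearMap.congr_fun hx ⟨y, hy⟩)
  · exact Subtype.ext (eq_zero_of_forall_soclePairing_eq_zero (by omega) y.2 fun x hx =>
      (soclePairing_comm _ _).trans (LinearMap.congr_fun hy ⟨x, hx⟩))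

end SoclePairing

section FixedAndCofixed

variable {Fq : Type} [Field Fq] {n : ℕ}

theorem mem_fixDeg_iff {Q d : ℕ} {H : Set (GL (Fin n) Fq)} {f : MvPolynomial (Fin n) Fq} :
    f ∈ fixDeg Fq n Q H d ↔
      f.IsHomogeneous d ∧
        ∀ g ∈ H, lsub (g : Matrix (Fin n) (Fin n) Fq) f - f ∈ frobPow Fq n Q := by
  simp [fixDeg]

theorem map_mkQ_fixDeg_le_Qdeg (Q d : ℕ) (H : Set (GL (Fin n) Fq)) :
    (fixDeg Fq n Q H d).map (frobPow Fq n Q).mkQ ≤ Qdeg Fq n Q d :=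
  Submodule.map_mono inf_le_left

theorem Ncof_le_Qdeg (Q d : ℕ) (H : Set (GL (Fin n) Fq)) : Ncof Fq n Q H d ≤ Qdeg Fq n Q d := by
  refine Submodule.span_le.mpr ?_
  rintro _ ⟨g, -, b, hb, rfl⟩
  exact Submodule.mem_map_of_mem ((isHomogeneous_lsub _ hb).sub hb)

variable [Fintype Fq] {m i j : ℕ}

theorem soclePairing_lsub_sub_left (hij : i + j = n * (Fintype.card Fq ^ m - 1))
    (g : GL (Fin n) Fq) {f b : MvPolynomial (Fin n) Fq}
    (hf : f.IsHomogeneous i) (hb : b.IsHomogeneous j) :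
    soclePairing Fq n (Fintype.card Fq ^ m)
        (Submodule.mkQ _ (lsub (g : Matrix (Fin n) (Fin n) Fq) f - f))
        (Submodule.mkQ _ (lsub (g : Matrix (Fin n) (Fin n) Fq) b)) =
      -soclePairing Fq n (Fintype.card Fq ^ m) (Submodule.mkQ _ f)
        (Submodule.mkQ _ (lsub (g : Matrix (Fin n) (Fin n) Fq) b - b)) := by
  have hinv := coeff_socleExponent_lsub m g (hij ▸ hf.mul hb)
  rw [map_mul] at hinv
  rw [soclePairing_mkQ_mkQ, soclePairing_mkQ_mkQ, sub_mul, mul_sub, coeff_sub, coeff_sub, hinv,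
    neg_sub]

theorem mem_map_mkQ_fixDeg_iff (hij : i + j = n * (Fintype.card Fq ^ m - 1))
    {H : Set (GL (Fin n) Fq)}
    {x : MvPolynomial (Fin n) Fq ⧸ frobPow Fq n (Fintype.card Fq ^ m)}
    (hx : x ∈ Qdeg Fq n (Fintype.card Fq ^ m) i) :
    x ∈ (fixDeg Fq n (Fintype.card Fq ^ m) H i).map (Submodule.mkQ _) ↔
      ∀ y ∈ Ncof Fq n (Fintype.card Fq ^ m) H j,
        soclePairing Fq n (Fintype.card Fq ^ m) x y = 0 := by
  constructor
  · rintro ⟨f, hf, rfl⟩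
    obtain ⟨hf, hfix⟩ := mem_fixDeg_iff.mp hf
    suffices h : Ncof Fq n _ H j ≤ LinearMap.ker (soclePairing Fq n _ (Submodule.mkQ _ f)) from
      fun y hy => h hy
    refine Submodule.span_le.mpr ?_
    rintro _ ⟨g, hg, b, hb, rfl⟩
    have hzero := (Submodule.Quotient.mk_eq_zero _).mpr (hfix g hg)
    have hadj := soclePairing_lsub_sub_left hij g hf hb
    rw [Submodule.mkQ_apply, hzero, map_zero, LinearMap.zero_apply] at hadj
    exact neg_eq_zero.mp hadj.symm
  · intro horth
    obtain ⟨f, hf, rfl⟩ := hx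
    refine Submodule.mem_map_of_mem (mem_fixDeg_iff.mpr ⟨hf, fun g hg => ?_⟩)
    refine mem_frobPow_of_forall_coeff_mul_eq_zero hij ((isHomogeneous_lsub _ hf).sub hf)
      fun b hb => ?_
    have hb' := isHomogeneous_lsub ((g⁻¹ : GL (Fin n) Fq) : Matrix (Fin n) (Fin n) Fq) hb
    have hadj := soclePairing_lsub_sub_left hij g hf hb'
    rw [horth _ (Submodule.subset_span ⟨g, hg, _, hb', rfl⟩), neg_zero, lsub_lsub_inv] at hadj
    exact hadj

end FixedAndCofixed

theorem statement4_general (m n : ℕ) (Fq : Type) [Field Fq] [Fintype Fq]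
    (H : Set (GL (Fin n) Fq)) {i j : ℕ} (hij : i + j = n * (Fintype.card Fq ^ m - 1)) :
    Module.finrank Fq
        (Submodule.map (frobPow Fq n (Fintype.card Fq ^ m)).mkQ
          (fixDeg Fq n (Fintype.card Fq ^ m) H i)) =
      Module.finrank Fq
        (↥(Qdeg Fq n (Fintype.card Fq ^ m) j) ⧸
          Submodule.comap (Qdeg Fq n (Fintype.card Fq ^ m) j).subtype
            (Ncof Fq n (Fintype.card Fq ^ m) H j)) := by
  have := isPerfPair_soclePairing (Fq := Fq) hij
  rw [← (Submodule.comapSubtypeEquivOfLe (map_mkQ_fixDeg_le_Qdeg _ i H)).finrank_eq]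
  refine finrank_eq_finrank_quotient_of_isPerfPair ((soclePairing Fq n _).domRestrict₁₂ _ _)
    fun x => (mem_map_mkQ_fixDeg_iff hij x.2).trans ?_
  exact ⟨fun h y hy => h y hy, fun h y hy => h ⟨y, Ncof_le_Qdeg _ j H hy⟩ hy⟩

/-- Corollary (complementary degree duality): with `d₀ = n(q^m − 1)`, for every composition `α`
of `n` and every `0 ≤ i ≤ d₀`, the dimension of the `P_α`-fixed subspace of `Q_i` equals the
dimension of the `P_α`-cofixed quotient of `Q_{d₀−i}`, where `Q = S/𝔪^{[q^m]}`. -/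
theorem statement4 (q m n ℓ : ℕ) (Fq : Type) [Field Fq] [Fintype Fq]
    (hcard : Fintype.card Fq = q) (α : ℕ → ℕ)
    (hpos : ∀ i < ℓ, 0 < α i) (hsum : ∑ i ∈ Finset.range ℓ, α i = n)
    (i : ℕ) (hi : i ≤ n * (q ^ m - 1)) :
    Module.finrank Fq
        (Submodule.map (frobPow Fq n (q ^ m)).mkQ (fixDeg Fq n (q ^ m) (Pa Fq n ℓ α) i))
      = Module.finrank Fq
          (↥(Qdeg Fq n (q ^ m) (n * (q ^ m - 1) - i)) ⧸
            Submodule.comap (Qdeg Fq n (q ^ m) (n * (q ^ m - 1) - i)).subtype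
              (Ncof Fq n (q ^ m) (Pa Fq n ℓ α) (n * (q ^ m - 1) - i))) := by
  subst hcard
  exact statement4_general m n Fq _ (Nat.add_sub_cancel' hi)
end

section
/- Let q be a prime power, S = F_q[x,y], X := x^{q−1}, Y := y^{q−1}, D_{2,1} := Σ_{i=0}^{q} X^i Y^{q−i}, D_{2,0} := Σ_{i=1}^{q} X^i Y^{q+1−i}, and let N_G be the F_q-span of {g(f) − f : g ∈ GL_2(F_q), f ∈ S}. Then for every element M of the set {1, XY, X²Y, …, X^{q−2}Y}: (a) D_{2,0}·M ∈ N_G; and (b) for every j ≥ 0, D_{2,1}^j·M ∉ N_G. In other words, in the cofixed space S_G := S/N_G the images of these monomials are annihilated by D_{2,0} but not by any power of D_{2,1}. -/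
open Finset Matrix MvPolynomial

/-- The span `N_G` of `{g(f) − f : g ∈ GL_2(F_q), f ∈ F_q[x,y]}`. -/
noncomputable def NG (Fq : Type) [Field Fq] : Submodule Fq (MvPolynomial (Fin 2) Fq) :=
  Submodule.span Fq
    {h | ∃ g : GL (Fin 2) Fq, ∃ f : MvPolynomial (Fin 2) Fq,
      h = lsub (g : Matrix (Fin 2) (Fin 2) Fq) f - f}

/-- The Dickson invariant `D_{2,1} = Σ_{i=0}^{q} X^i Y^{q−i}` (where `X = x^{q−1}`,
`Y = y^{q−1}`). -/
noncomputable def D21 (q : ℕ) (Fq : Type) [Field Fq] : MvPolynomial (Fin 2) Fq :=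
  ∑ i ∈ Finset.range (q + 1),
    MvPolynomial.X 0 ^ (i * (q - 1)) * MvPolynomial.X 1 ^ ((q - i) * (q - 1))

/-- The Dickson invariant `D_{2,0} = Σ_{i=1}^{q} X^i Y^{q+1−i}` (where `X = x^{q−1}`,
`Y = y^{q−1}`). -/
noncomputable def D20 (q : ℕ) (Fq : Type) [Field Fq] : MvPolynomial (Fin 2) Fq :=
  ∑ i ∈ Finset.Icc 1 q,
    MvPolynomial.X 0 ^ (i * (q - 1)) * MvPolynomial.X 1 ^ ((q + 1 - i) * (q - 1))

/-!
Write `q = #K`, `X = x ^ (q - 1)` and `Y = y ^ (q - 1)`, and let `≡` be congruence modulo `N_G`.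

For (a), the polynomial `L = x ^ q - x y ^ (q - 1) = x (X - Y)` is fixed by the transvection
`x ↦ x - y`. Applying that transvection to `x ^ (q - 1) L ^ s y ^ t` and using
`(x - y) ^ (q - 1) = ∑ x ^ i y ^ (q - 1 - i)` gives a sum lying in `N_G`, from which the torus
weights isolate `X (X - Y) ^ s Y ^ r ≡ 0` for `1 ≤ s ≤ q - 1`, `1 ≤ r`. The binomial expansion of
`X ^ m = ((X - Y) + Y) ^ m`, together with the swap of the variables, then yields
`X ^ a Y ^ b ≡ X Y ^ (a + b - 1)` for `a, b ≥ 1` and `a + b ≤ 2 q`. So the `q` terms of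
`D_{2,0} M` are all congruent to one another, and their sum is `q` times one of them, that is, `0`.

For (b), the sum of the values over the nonzero points of `K ^ 2` is a linear functional vanishing
on `N_G`. Since `D_{2,1}` takes the value `1` at each of these points, the functional takes the same
value at `D_{2,1} ^ j M` and at `M`, and this value is `-1` for `M = 1` and `1` for `M = X ^ i Y`.
-/

section FiniteFieldAlgebra

variable (K : Type*) [Field K] [Fintype K]

local notation "q" => Fintype.card K

lemma natCast_card_eq_zero_of_algebra (R : Type*) [Semiring R] [Algebra K R] : (q : R) = 0 := by
  rw [← map_natCast (algebraMap K R), FiniteField.cast_card_eq_zero, map_zero]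

lemma sub_pow_card_of_algebra {R : Type*} [CommRing R] [Algebra K R] (a b : R) :
    (a - b) ^ q = a ^ q - b ^ q :=
  map_sub (FiniteField.frobeniusAlgHom K R) a b

lemma sub_pow_card_sub_one_eq_sum {R : Type*} [CommRing R] [IsDomain R] [Algebra K R] (a b : R) :
    (a - b) ^ (q - 1) = ∑ i ∈ range q, a ^ i * b ^ (q - 1 - i) := by
  rcases eq_or_ne a b with rfl | hab
  · rw [geom_sum₂_self, natCast_card_eq_zero_of_algebra, zero_mul, sub_self,
      zero_pow (Nat.sub_ne_zero_of_lt Fintype.one_lt_card)]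
  · apply mul_right_cancel₀ (sub_ne_zero.mpr hab)
    rw [(Commute.all a b).geom_sum₂_mul, pow_sub_one_mul Fintype.card_ne_zero,
      sub_pow_card_of_algebra]

variable {K}

lemma pow_mul_card_sub_one_eq_one {a : K} (ha : a ≠ 0) (n : ℕ) : a ^ (n * (q - 1)) = 1 := by
  rw [mul_comm, pow_mul, FiniteField.pow_card_sub_one_eq_one a ha, one_pow]

lemma sum_pow_mul_card_sub_one {n : ℕ} (hn : n ≠ 0) : ∑ a : K, a ^ (n * (q - 1)) = -1 := by
  classical
  have hexp : n * (q - 1) ≠ 0 := mul_ne_zero hn (Nat.sub_ne_zero_of_lt Fintype.one_lt_card)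
  calc ∑ a : K, a ^ (n * (q - 1)) = ∑ a ∈ univ.erase (0 : K), 1 := by
        rw [← add_sum_erase _ _ (mem_univ 0), zero_pow hexp, zero_add]
        exact sum_congr rfl fun a ha => pow_mul_card_sub_one_eq_one (ne_of_mem_erase ha) n
    _ = -1 := by
        rw [sum_const, card_erase_of_mem (mem_univ _), card_univ, nsmul_one,
          Nat.cast_pred Fintype.card_pos, FiniteField.cast_card_eq_zero, zero_sub]

end FiniteFieldAlgebra

section LinearSubstitution

variable {K : Type} [Field K]

lemma lsub_X {n : ℕ} (g : Matrix (Fin n) (Fin n) K) (i : Fin n) :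
    lsub g (X i) = ∑ j, C (g i j) * X j :=
  aeval_X _ i

lemma eval_lsub {n : ℕ} (g : Matrix (Fin n) (Fin n) K) (f : MvPolynomial (Fin n) K)
    (v : Fin n → K) : eval v (lsub g f) = eval (g *ᵥ v) f := by
  have hcomp : (aeval v).comp (lsub g) = aeval (g *ᵥ v) := by
    ext i
    simp [lsub_X, mulVec, dotProduct]
  exact DFunLike.congr_fun hcomp f

lemma lsub_transvection_X_zero :
    lsub !![1, -1; 0, 1] (X 0 : MvPolynomial (Fin 2) K) = X 0 - X 1 := by
  simp [lsub_X, sub_eq_add_neg]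

lemma lsub_transvection_X_one :
    lsub !![1, -1; 0, 1] (X 1 : MvPolynomial (Fin 2) K) = X 1 := by
  simp [lsub_X]

lemma lsub_smodEq {g : Matrix (Fin 2) (Fin 2) K} (hg : IsUnit g.det)
    (f : MvPolynomial (Fin 2) K) : lsub g f ≡ f [SMOD NG K] :=
  SModEq.sub_mem.mpr (Submodule.subset_span ⟨GeneralLinearGroup.mk'' g hg, f, rfl⟩)

lemma X_pow_mul_X_pow_smodEq_swap (a b : ℕ) :
    (X 0 ^ a * X 1 ^ b : MvPolynomial (Fin 2) K) ≡ X 0 ^ b * X 1 ^ a [SMOD NG K] := by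
  have hswap := lsub_smodEq (g := !![0, 1; 1, 0]) (by simp [det_fin_two])
    (X 0 ^ b * X 1 ^ a : MvPolynomial (Fin 2) K)
  rw [mul_comm (X 0 ^ a)]
  simpa [lsub_X] using hswap

/-- `f` is a weight vector of weight `e` for the torus of matrices `diag(u, 1)`. -/
def HasTorusWeight (f : MvPolynomial (Fin 2) K) (e : ℕ) : Prop :=
  ∀ u : Kˣ, lsub !![(u : K), 0; 0, 1] f = (u : K) ^ e • f

namespace HasTorusWeight

variable {f g : MvPolynomial (Fin 2) K} {d e : ℕ}

lemma mul (hf : HasTorusWeight f d) (hg : HasTorusWeight g e) :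
    HasTorusWeight (f * g) (d + e) := fun u => by
  rw [map_mul, hf u, hg u, smul_mul_smul_comm, pow_add]

lemma pow (hf : HasTorusWeight f d) (n : ℕ) : HasTorusWeight (f ^ n) (d * n) := fun u => by
  rw [map_pow, hf u, smul_pow, pow_mul]

lemma X_zero : HasTorusWeight (X 0 : MvPolynomial (Fin 2) K) 1 := fun u => by
  simp [lsub_X, smul_eq_C_mul]

lemma X_one : HasTorusWeight (X 1 : MvPolynomial (Fin 2) K) 0 := fun u => by
  simp [lsub_X]

lemma mem_NG [Fintype K] (hf : HasTorusWeight f e) (he : ¬ Fintype.card K - 1 ∣ e) :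
    f ∈ NG K := by
  obtain ⟨u, hu⟩ : ∃ u : Kˣ, u ^ e ≠ 1 := by
    simpa only [not_forall] using mt (FiniteField.forall_pow_eq_one_iff K e).mp he
  have hu' : (u : K) ^ e - 1 ≠ 0 := sub_ne_zero.mpr fun h => hu (Units.ext (by simpa using h))
  have hmem := SModEq.sub_mem.mp (lsub_smodEq (g := !![(u : K), 0; 0, 1]) (by simp) f)
  have hsmul : (u : K) ^ e • f - f = ((u : K) ^ e - 1) • f := by rw [sub_smul, one_smul]
  rwa [hf u, hsmul, Submodule.smul_mem_iff _ hu'] at hmem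

end HasTorusWeight

end LinearSubstitution

section Congruences

variable (K : Type) [Field K] [Fintype K]

local notation "q" => Fintype.card K

/-- The product `∏ (x + a y)` over `a ∈ K`, that is, over the orbit of `x` under the
transvections fixing `y`, in its expanded form. -/
noncomputable def transvectionNorm : MvPolynomial (Fin 2) K :=
  X 0 ^ q - X 0 * X 1 ^ (q - 1)

lemma transvectionNorm_eq_X_mul :
    transvectionNorm K = X 0 * (X 0 ^ (q - 1) - X 1 ^ (q - 1)) := by
  rw [transvectionNorm, mul_sub, mul_pow_sub_one Fintype.card_ne_zero]

lemma lsub_transvectionNorm : lsub !![1, -1; 0, 1] (transvectionNorm K) = transvectionNorm K := by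
  simp only [transvectionNorm, map_sub, map_mul, map_pow, lsub_transvection_X_zero,
    lsub_transvection_X_one]
  rw [sub_pow_card_of_algebra, sub_mul, mul_pow_sub_one Fintype.card_ne_zero,
    sub_sub_sub_cancel_right]

lemma hasTorusWeight_transvectionNorm : HasTorusWeight (transvectionNorm K) 1 := fun u => by
  have hu : (u : K) ^ q = u := FiniteField.pow_card _
  have hX0 := HasTorusWeight.X_zero u
  have hX1 := HasTorusWeight.X_one u
  simp only [pow_one, pow_zero, one_smul] at hX0 hX1
  simp only [transvectionNorm, map_sub, map_mul, map_pow, hX0, hX1, smul_pow, hu,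
    smul_mul_assoc, smul_sub, pow_one]

variable {K}

lemma sum_X_pow_mul_X_pow_mul_mem_NG {f : MvPolynomial (Fin 2) K}
    (hinv : lsub !![1, -1; 0, 1] f = f) :
    ∑ i ∈ range (q - 1), X 0 ^ i * X 1 ^ (q - 1 - i) * f ∈ NG K := by
  have hsum : ∑ i ∈ range (q - 1), (X 0 ^ i * X 1 ^ (q - 1 - i) : MvPolynomial (Fin 2) K) =
      (X 0 - X 1) ^ (q - 1) - X 0 ^ (q - 1) := by
    rw [sub_pow_card_sub_one_eq_sum, eq_sub_iff_add_eq,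
      ← Nat.sub_add_cancel (Fintype.card_pos (α := K)), sum_range_succ]
    simp
  have hmem : lsub !![1, -1; 0, 1] (X 0 ^ (q - 1) * f) - X 0 ^ (q - 1) * f ∈ NG K :=
    SModEq.sub_mem.mp (lsub_smodEq (by simp) _)
  rwa [map_mul, map_pow, lsub_transvection_X_zero, hinv, ← sub_mul, ← hsum, sum_mul] at hmem

-- Exactly one term of the preceding sum, the one with `i + s = q - 1`, has a torus weight
-- divisible by `q - 1`; all the others vanish in the cofixed space.
lemma X_pow_mul_X_pow_mul_mem_NG_of_hasTorusWeight {f : MvPolynomial (Fin 2) K} {s : ℕ}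
    (hinv : lsub !![1, -1; 0, 1] f = f) (hweight : HasTorusWeight f s)
    (hs : s ≠ 0) (hsq : s ≤ q - 1) : X 0 ^ (q - 1 - s) * X 1 ^ s * f ∈ NG K := by
  have hothers : ∀ i ∈ (range (q - 1)).erase (q - 1 - s),
      X 0 ^ i * X 1 ^ (q - 1 - i) * f ∈ NG K := by
    intro i hi
    obtain ⟨hne, hlt⟩ : i ≠ q - 1 - s ∧ i < q - 1 := by simpa using hi
    have hterm : HasTorusWeight (X 0 ^ i * X 1 ^ (q - 1 - i) * f) (i + s) := by
      simpa using ((HasTorusWeight.X_zero.pow i).mul (HasTorusWeight.X_one.pow _)).mul hweight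
    refine hterm.mem_NG fun hdvd => ?_
    have heq : i + s = q - 1 :=
      Nat.eq_of_dvd_of_lt_two_mul (by omega) hdvd (by omega)
    omega
  have hmem : q - 1 - s ∈ range (q - 1) := by rw [mem_range]; omega
  have hsum := sum_X_pow_mul_X_pow_mul_mem_NG hinv
  rw [← add_sum_erase _ _ hmem,
    Submodule.add_mem_iff_left _ (Submodule.sum_mem _ hothers)] at hsum
  rwa [Nat.sub_sub_self hsq] at hsum

lemma X_pow_mul_sub_pow_mul_X_pow_mem_NG {s r : ℕ} (hs : s ≠ 0) (hsq : s ≤ q - 1) (hr : r ≠ 0) :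
    (X 0 ^ (q - 1) * (X 0 ^ (q - 1) - X 1 ^ (q - 1)) ^ s * X 1 ^ (r * (q - 1)) :
      MvPolynomial (Fin 2) K) ∈ NG K := by
  obtain ⟨t, ht⟩ : ∃ t, r * (q - 1) = s + t :=
    Nat.exists_eq_add_of_le (hsq.trans (Nat.le_mul_of_pos_left _ (Nat.pos_of_ne_zero hr)))
  have hinv : lsub !![1, -1; 0, 1] (transvectionNorm K ^ s * X 1 ^ t) =
      transvectionNorm K ^ s * X 1 ^ t := by
    rw [map_mul, map_pow, map_pow, lsub_transvectionNorm, lsub_transvection_X_one]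
  have hweight : HasTorusWeight (transvectionNorm K ^ s * X 1 ^ t) s := by
    simpa using ((hasTorusWeight_transvectionNorm K).pow s).mul (HasTorusWeight.X_one.pow t)
  convert X_pow_mul_X_pow_mul_mem_NG_of_hasTorusWeight hinv hweight hs hsq using 1
  rw [ht, transvectionNorm_eq_X_mul, mul_pow (X 0), pow_add, ← pow_sub_mul_pow (X 0) hsq]
  ring

lemma X_pow_mul_X_pow_smodEq_of_le {m r : ℕ} (hm : m ≤ q - 1) (hr : r ≠ 0) :
    (X 0 ^ ((m + 1) * (q - 1)) * X 1 ^ (r * (q - 1)) : MvPolynomial (Fin 2) K) ≡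
      X 0 ^ (q - 1) * X 1 ^ ((m + r) * (q - 1)) [SMOD NG K] := by
  set x : MvPolynomial (Fin 2) K := X 0 ^ (q - 1) with hx
  set y : MvPolynomial (Fin 2) K := X 1 ^ (q - 1) with hy
  have hexpand : X 0 ^ ((m + 1) * (q - 1)) * X 1 ^ (r * (q - 1)) - x * X 1 ^ ((m + r) * (q - 1)) =
      ∑ s ∈ range m, m.choose (s + 1) •
        (x * (x - y) ^ (s + 1) * X 1 ^ ((m - (s + 1) + r) * (q - 1))) := by
    have hbinom : x ^ m = ∑ s ∈ range m,
        (x - y) ^ (s + 1) * y ^ (m - (s + 1)) * m.choose (s + 1) + y ^ m := by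
      simpa [sum_range_succ'] using add_pow (x - y) y m
    simp only [mul_comm _ (q - 1), pow_mul, ← hx, ← hy]
    calc x ^ (m + 1) * y ^ r - x * y ^ (m + r) = x * y ^ r * (x ^ m - y ^ m) := by ring
      _ = _ := by
        rw [hbinom, add_sub_cancel_right, mul_sum]
        refine sum_congr rfl fun s _ => ?_
        rw [nsmul_eq_mul]
        ring
  rw [SModEq.sub_mem, hexpand]
  refine Submodule.sum_mem _ fun s hs => nsmul_mem ?_ _
  have hsm := mem_range.mp hs
  exact X_pow_mul_sub_pow_mul_X_pow_mem_NG s.succ_ne_zero (by omega) (by omega)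

lemma X_pow_mul_X_pow_smodEq {a b : ℕ} (ha : a ≠ 0) (hb : b ≠ 0) (hab : a + b ≤ 2 * q) :
    (X 0 ^ (a * (q - 1)) * X 1 ^ (b * (q - 1)) : MvPolynomial (Fin 2) K) ≡
      X 0 ^ (q - 1) * X 1 ^ ((a + b - 1) * (q - 1)) [SMOD NG K] := by
  rcases le_or_gt a q with haq | haq
  · have h := X_pow_mul_X_pow_smodEq_of_le (K := K) (m := a - 1) (by omega) hb
    rwa [Nat.sub_add_cancel (by omega), ← Nat.sub_add_comm (by omega)] at h
  · have h := X_pow_mul_X_pow_smodEq_of_le (K := K) (m := b - 1) (by omega) ha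
    rw [Nat.sub_add_cancel (by omega), ← Nat.sub_add_comm (by omega), add_comm b a] at h
    exact (X_pow_mul_X_pow_smodEq_swap _ _).trans h

lemma D20_mul_X_pow_mul_X_pow_mem_NG {c d : ℕ} (hcd : c + d < q) :
    D20 q K * (X 0 ^ (c * (q - 1)) * X 1 ^ (d * (q - 1))) ∈ NG K := by
  rw [← SModEq.zero]
  calc D20 q K * (X 0 ^ (c * (q - 1)) * X 1 ^ (d * (q - 1)))
      = ∑ k ∈ Icc 1 q, X 0 ^ ((k + c) * (q - 1)) * X 1 ^ ((q + 1 - k + d) * (q - 1)) := by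
        rw [D20, sum_mul]
        refine sum_congr rfl fun k _ => ?_
        rw [add_mul, add_mul, pow_add, pow_add, mul_mul_mul_comm]
    _ ≡ ∑ k ∈ Icc 1 q, X 0 ^ (q - 1) * X 1 ^ ((q + c + d) * (q - 1)) [SMOD NG K] := by
        refine SModEq.sum fun k hk => ?_
        rw [mem_Icc] at hk
        convert X_pow_mul_X_pow_smodEq (K := K) (a := k + c) (b := q + 1 - k + d)
          (by omega) (by omega) (by omega) using 4
        omega
    _ = 0 := by
        rw [sum_const, Nat.card_Icc, Nat.add_sub_cancel, nsmul_eq_mul,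
          natCast_card_eq_zero_of_algebra K, zero_mul]

end Congruences

section PointSums

variable (n : ℕ) (K : Type) [Field K] [Fintype K]

local notation "q" => Fintype.card K

open Classical in
/-- The linear functional summing the values of a polynomial over the nonzero points of `K ^ n`.
Since `GL` permutes these points, it descends to the cofixed space. -/
noncomputable def sumEvalNonzero : MvPolynomial (Fin n) K →ₗ[K] K :=
  ∑ v : Fin n → K with v ≠ 0, (aeval v).toLinearMap

variable {n K}

open Classical in
lemma sumEvalNonzero_apply (f : MvPolynomial (Fin n) K) :
    sumEvalNonzero n K f = ∑ v : Fin n → K with v ≠ 0, eval v f := by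
  simp [sumEvalNonzero, aeval_eq_eval]

lemma sumEvalNonzero_eq_sub (f : MvPolynomial (Fin n) K) :
    sumEvalNonzero n K f = ∑ v : Fin n → K, eval v f - eval 0 f := by
  classical
  rw [sumEvalNonzero_apply, filter_ne', ← add_sum_erase _ _ (mem_univ 0), add_sub_cancel_left]

lemma sumEvalNonzero_congr {f g : MvPolynomial (Fin n) K}
    (h : ∀ v ≠ 0, eval v f = eval v g) : sumEvalNonzero n K f = sumEvalNonzero n K g := by
  classical
  rw [sumEvalNonzero_apply, sumEvalNonzero_apply]
  exact sum_congr rfl fun v hv => h v (mem_filter.mp hv).2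

lemma sumEvalNonzero_lsub (g : GL (Fin n) K) (f : MvPolynomial (Fin n) K) :
    sumEvalNonzero n K (lsub (g : Matrix (Fin n) (Fin n) K) f) = sumEvalNonzero n K f := by
  have hbij : Function.Bijective ((g : Matrix (Fin n) (Fin n) K) *ᵥ ·) :=
    Finite.injective_iff_bijective.mp (mulVec_injective_of_isUnit g.isUnit)
  simp only [sumEvalNonzero_eq_sub, eval_lsub, mulVec_zero, hbij.sum_comp (eval · f)]

lemma sumEvalNonzero_one [NeZero n] : sumEvalNonzero n K 1 = -1 := by
  simp [sumEvalNonzero_eq_sub, NeZero.ne n]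

lemma sumEvalNonzero_prod_X_pow [NeZero n] {e : Fin n → ℕ} (he : ∀ i, e i ≠ 0) :
    sumEvalNonzero n K (∏ i, X i ^ (e i * (q - 1))) = (-1) ^ n := by
  classical
  have hexp (i : Fin n) : e i * (q - 1) ≠ 0 :=
    mul_ne_zero (he i) (Nat.sub_ne_zero_of_lt Fintype.one_lt_card)
  calc sumEvalNonzero n K (∏ i, X i ^ (e i * (q - 1)))
      = ∑ v : Fin n → K, ∏ i, v i ^ (e i * (q - 1)) := by
        simp [sumEvalNonzero_eq_sub, hexp, NeZero.ne n]
    _ = ∏ i, ∑ a : K, a ^ (e i * (q - 1)) := by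
        rw [prod_univ_sum, Fintype.piFinset_univ]
    _ = (-1) ^ n := by
        simp only [sum_pow_mul_card_sub_one (he _), prod_const, card_univ, Fintype.card_fin]

lemma sumEvalNonzero_X_pow_mul_X_pow {a b : ℕ} (ha : a ≠ 0) (hb : b ≠ 0) :
    sumEvalNonzero 2 K (X 0 ^ (a * (q - 1)) * X 1 ^ (b * (q - 1))) = 1 := by
  simpa using sumEvalNonzero_prod_X_pow (K := K) (e := ![a, b]) (by simp [Fin.forall_fin_two, *])

lemma NG_le_ker_sumEvalNonzero : NG K ≤ LinearMap.ker (sumEvalNonzero 2 K) := by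
  rw [NG, Submodule.span_le]
  rintro _ ⟨g, f, rfl⟩
  rw [SetLike.mem_coe, LinearMap.mem_ker, map_sub, sumEvalNonzero_lsub, sub_self]

lemma eval_D21_of_ne_zero {v : Fin 2 → K} (hv : v ≠ 0) : eval v (D21 q K) = 1 := by
  have hq : q - 1 ≠ 0 := Nat.sub_ne_zero_of_lt Fintype.one_lt_card
  have hzero {k : ℕ} (hk : k ≠ 0) : (0 : K) ^ (k * (q - 1)) = 0 := zero_pow (mul_ne_zero hk hq)
  simp only [D21, map_sum, map_mul, map_pow, eval_X]
  by_cases h0 : v 0 = 0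
  · have h1 : v 1 ≠ 0 := fun h1 => hv (by ext i; fin_cases i <;> assumption)
    rw [sum_range_succ', sum_eq_zero fun i _ => by rw [h0, hzero i.succ_ne_zero, zero_mul]]
    simp [pow_mul_card_sub_one_eq_one h1]
  · by_cases h1 : v 1 = 0
    · rw [sum_range_succ, sum_eq_zero fun i hi => by
        rw [h1, hzero (Nat.sub_ne_zero_of_lt (mem_range.mp hi)), mul_zero]]
      simp [pow_mul_card_sub_one_eq_one h0]
    · simp [pow_mul_card_sub_one_eq_one h0, pow_mul_card_sub_one_eq_one h1]

lemma D21_pow_mul_notMem_NG {f : MvPolynomial (Fin 2) K} (hf : sumEvalNonzero 2 K f ≠ 0)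
    (j : ℕ) : D21 q K ^ j * f ∉ NG K := fun hmem => hf <| by
  rw [← LinearMap.mem_ker.mp (NG_le_ker_sumEvalNonzero hmem)]
  exact sumEvalNonzero_congr fun v hv => by simp [eval_D21_of_ne_zero hv]

end PointSums

/-- Corollary: in the `GL_2(F_q)`-cofixed space `S_G = F_q[x,y]/N_G`, the images of the
monomials `{1, XY, X²Y, …, X^{q−2}Y}` (with `X = x^{q−1}`, `Y = y^{q−1}`) are all annihilated
by `D_{2,0}`, but none of them is annihilated by any power of `D_{2,1}`. -/
theorem statement15 (q : ℕ) (hq : IsPrimePow q) (Fq : Type) [Field Fq] [Fintype Fq]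
    (hcard : Fintype.card Fq = q) :
    ∀ M ∈ (insert (1 : MvPolynomial (Fin 2) Fq)
        {p : MvPolynomial (Fin 2) Fq | ∃ i : ℕ, 1 ≤ i ∧ i ≤ q - 2 ∧
          p = MvPolynomial.X 0 ^ (i * (q - 1)) * MvPolynomial.X 1 ^ (q - 1)}),
      D20 q Fq * M ∈ NG Fq ∧ ∀ j : ℕ, D21 q Fq ^ j * M ∉ NG Fq := by
  subst hcard
  rintro M (rfl | ⟨i, hi, hiq, rfl⟩)
  · constructor
    · simpa using D20_mul_X_pow_mul_X_pow_mem_NG (K := Fq) (c := 0) (d := 0) Fintype.card_pos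
    · exact D21_pow_mul_notMem_NG (by simp [sumEvalNonzero_one])
  · have hM := sumEvalNonzero_X_pow_mul_X_pow (K := Fq) (a := i) (b := 1) (by omega) one_ne_zero
    rw [one_mul] at hM
    constructor
    · simpa using D20_mul_X_pow_mul_X_pow_mem_NG (K := Fq) (c := i) (d := 1) (by omega)
    · exact D21_pow_mul_notMem_NG (by simp [hM])
end

section
/- Let q be a prime power, S = F_q[x,y], and B ⊆ GL_2(F_q) the Borel subgroup of upper-triangular matrices. Then the graded B-cofixed space S_B has Hilbert series Hilb(S_B, t) = t^{q−1}/((1−t^{q−1})(1−t^{q²−q})) + (1 + Σ_{j=2}^{q−1} t^{j(q−1)})/(1−t^{q²−q}) as an identity in ℤ[[t]] (the sum Σ_{j=2}^{q−1} being empty when q = 2). -/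
open Finset Matrix MvPolynomial PowerSeries

/-- The Borel subgroup of invertible upper-triangular matrices in `GL_2(F_q)`. -/
def Bset (Fq : Type) [Field Fq] : Set (GL (Fin 2) Fq) :=
  {g | (g : Matrix (Fin 2) (Fin 2) Fq) 1 0 = 0}

/-- The span `N_B` of `{g(f) − f : g ∈ B, f ∈ F_q[x,y]}`. -/
noncomputable def NB (Fq : Type) [Field Fq] : Submodule Fq (MvPolynomial (Fin 2) Fq) :=
  Submodule.span Fq
    {h | ∃ g ∈ Bset Fq, ∃ f : MvPolynomial (Fin 2) Fq,
      h = lsub ((g : GL (Fin 2) Fq) : Matrix (Fin 2) (Fin 2) Fq) f - f}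

/-- The Hilbert series of the graded quotient of `F_q[x,y]` by a (graded) subspace `N`:
the degree-`d` coefficient is the dimension of `S_d/(S_d ∩ N)`. -/
noncomputable def hilbQuot (Fq : Type) [Field Fq]
    (N : Submodule Fq (MvPolynomial (Fin 2) Fq)) : PowerSeries ℚ :=
  PowerSeries.mk fun d =>
    (Module.finrank Fq
      (↥(MvPolynomial.homogeneousSubmodule (Fin 2) Fq d) ⧸
        Submodule.comap (MvPolynomial.homogeneousSubmodule (Fin 2) Fq d).subtype N) : ℚ)

/-!
Let `B` be the Borel subgroup and `z = x ^ q - x * y ^ (q - 1)`, the product of the linear forms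
`x + c * y`, `c ∈ F_q`. An element of `B` with diagonal `(a, d)` multiplies `z` by `a ^ q`. In the
homogeneous basis `w_{i,j} = x ^ (i % q) * z ^ (i / q) * y ^ j` it therefore acts triangularly, with
diagonal entries `a ^ i * d ^ j`, and the binomial theorem for `x ^ (i % q)` gives the lower terms.

All `w_{i,j}` with `q - 1 ∤ i` or `q - 1 ∤ j` lie in `N_B`, since a diagonal matrix rescales them
nontrivially. For the other exponents with `i % q < q - 1` and `j ≠ 0`, the form `w_{i,j}` is, up to
terms of the first kind, a multiple of `u(f) - f` for the matrix `u` with rows `(1, 1)`, `(0, 1)`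
and a suitable basis element `f`, the factor `(q - 1).choose (i % q) = ±1` being nonzero. By
triangularity these `w_{i,j}` span `N_B`, so a basis of the cofixed space is given by the exponents
divisible by `q - 1` with `i % q = q - 1` or `j = 0`. Writing `i = (q - 1) * m`, the condition
`i % q = q - 1` becomes `m % q = 1`, and both parts of the Hilbert series are geometric.
-/

namespace BorelCofixed

section LinearAlgebra

theorem finrank_quotient_span_image {ι R M : Type*} [CommRing R] [Nontrivial R] [AddCommGroup M]
    [Module R M] (b : Module.Basis ι R M) (T : Set ι) :
    Module.finrank R (M ⧸ Submodule.span R (b '' T)) = Tᶜ.ncard := by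
  have hcompl : IsCompl (Submodule.span R (b '' T)) (Submodule.span R (b '' Tᶜ)) :=
    b.linearIndependent.isCompl_span_image b.span_eq isCompl_compl
  rw [(Submodule.quotientEquivOfIsCompl _ _ hcompl).finrank_eq, Set.image_eq_range]
  exact Module.finrank_eq_nat_card_basis
    (Module.Basis.span (b.linearIndependent.comp _ Subtype.val_injective))

theorem exists_basis_span_image {ι R M : Type*} [Semiring R] [AddCommMonoid M] [Module R M]
    (b : Module.Basis ι R M) (A : Set ι) :
    ∃ c : Module.Basis A R (Submodule.span R (b '' A)), ∀ i, (c i : M) = b i := by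
  rw [Set.image_eq_range]
  exact ⟨Module.Basis.span (b.linearIndependent.comp _ Subtype.val_injective),
    fun i => congrArg Subtype.val (Module.Basis.span_apply _ i)⟩

theorem finrank_quotient_comap_subtype_span_image {ι R M : Type*} [CommRing R] [Nontrivial R]
    [AddCommGroup M] [Module R M] (b : Module.Basis ι R M) (A T : Set ι) :
    Module.finrank R (Submodule.span R (b '' A) ⧸
      (Submodule.span R (b '' T)).comap (Submodule.span R (b '' A)).subtype) = (A \ T).ncard := by
  obtain ⟨c, hc⟩ := exists_basis_span_image b A
  have hcomap : (Submodule.span R (b '' T)).comap (Submodule.span R (b '' A)).subtype =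
      Submodule.span R (c '' ((↑) ⁻¹' T : Set A)) := by
    apply Submodule.map_injective_of_injective (Submodule.injective_subtype _)
    have himage : Submodule.subtype _ '' (c '' ((↑) ⁻¹' T : Set A)) = b '' (A ∩ T) := by
      rw [← Subtype.image_preimage_coe, ← Set.image_comp, ← Set.image_comp]
      exact Set.image_congr fun i _ => hc i
    rw [Submodule.map_comap_subtype, Submodule.map_span, himage]
    ext m
    simp only [Submodule.mem_inf, b.mem_span_image, Set.subset_inter_iff]
  have hdiff : (↑) '' ((↑) ⁻¹' T : Set A)ᶜ = A \ T := by
    rw [← Set.preimage_compl, Subtype.image_preimage_coe, Set.sdiff_eq]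
  rw [← hdiff, Set.ncard_image_of_injective _ Subtype.val_injective, hcomap,
    finrank_quotient_span_image c]

theorem homogeneousSubmodule_eq_span_image {ι σ R : Type*} [CommSemiring R]
    (b : Module.Basis ι R (MvPolynomial σ R)) {deg : ι → ℕ}
    (hb : ∀ i, (b i).IsHomogeneous (deg i)) (d : ℕ) :
    homogeneousSubmodule σ R d = Submodule.span R (b '' {i | deg i = d}) := by
  apply le_antisymm
  · intro f hf
    have hcomp : Submodule.span R (Set.range b) ≤
        (Submodule.span R (b '' {i | deg i = d})).comap (homogeneousComponent d) := by
      rw [Submodule.span_le]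
      rintro _ ⟨i, rfl⟩
      simp only [Submodule.comap_coe, Set.mem_preimage, homogeneousComponent_of_mem (hb i),
        SetLike.mem_coe]
      split_ifs with hi
      · exact Submodule.subset_span ⟨i, hi.symm, rfl⟩
      · exact zero_mem _
    rw [← homogeneousComponent_eq_self hf]
    exact hcomp (b.span_eq ▸ Submodule.mem_top)
  · rw [Submodule.span_le]
    rintro _ ⟨i, rfl, rfl⟩
    exact hb i

end LinearAlgebra

section Binomial

theorem natCast_choose_prime_pow_sub_one {R : Type*} [Ring R] (p : ℕ) [hp : Fact p.Prime]
    [CharP R p] (n : ℕ) {k : ℕ} (hk : k < p ^ n) : ((p ^ n - 1).choose k : R) = (-1) ^ k := by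
  induction k with
  | zero => simp
  | succ k ih =>
    have hpascal : (p ^ n).choose (k + 1) = (p ^ n - 1).choose k + (p ^ n - 1).choose (k + 1) :=
      Nat.choose_eq_choose_pred_add (by omega) (k.succ_pos)
    have hzero : ((p ^ n).choose (k + 1) : R) = 0 :=
      (CharP.cast_eq_zero_iff R p _).mpr (hp.out.dvd_choose_pow k.succ_ne_zero hk.ne)
    rw [hpascal, Nat.cast_add, ih (by omega)] at hzero
    rw [pow_succ, mul_neg_one, eq_neg_of_add_eq_zero_right hzero]

theorem natCast_choose_card_sub_one_ne_zero {F : Type*} [Field F] [Fintype F] {k : ℕ}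
    (hk : k < Fintype.card F) : ((Fintype.card F - 1).choose k : F) ≠ 0 := by
  obtain ⟨p, _⟩ := CharP.exists F
  obtain ⟨n, hp, hcard⟩ := FiniteField.card F p
  have := Fact.mk hp
  rw [hcard] at hk ⊢
  rw [natCast_choose_prime_pow_sub_one p n hk]
  exact pow_ne_zero _ (neg_ne_zero.mpr one_ne_zero)

end Binomial

section GeneratingFunctions

variable {R : Type*}

variable (R) in
/-- The generating function `∑_{n ∈ A} X ^ n` of a set of natural numbers. -/
noncomputable def indicatorSeries [Semiring R] (A : Set ℕ) : R⟦X⟧ := PowerSeries.mk (A.indicator 1)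

variable (R) in
/-- The generating function `∑_{s ∈ T} X ^ (s.1 + s.2)` of a set of pairs of natural numbers. -/
noncomputable def sumSeries [Semiring R] (T : Set (ℕ × ℕ)) : R⟦X⟧ :=
  PowerSeries.mk fun d => ∑ s ∈ antidiagonal d, T.indicator 1 s

theorem coeff_sumSeries [Semiring R] (T : Set (ℕ × ℕ)) (d : ℕ) :
    PowerSeries.coeff d (sumSeries R T) = ({s | s.1 + s.2 = d} ∩ T).ncard := by
  classical
  have hset : {s | s.1 + s.2 = d} ∩ T = ↑{s ∈ antidiagonal d | s ∈ T} := by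
    ext s
    simp
  rw [sumSeries, PowerSeries.coeff_mk, hset, Set.ncard_coe_finset, Finset.natCast_card_filter]
  rfl

theorem sumSeries_union [Semiring R] {T U : Set (ℕ × ℕ)} (h : Disjoint T U) :
    sumSeries R (T ∪ U) = sumSeries R T + sumSeries R U := by
  ext d
  simp only [sumSeries, map_add, PowerSeries.coeff_mk, Set.indicator_union_of_disjoint h,
    sum_add_distrib]

theorem sumSeries_prod [Semiring R] (A B : Set ℕ) :
    sumSeries R (A ×ˢ B) = indicatorSeries R A * indicatorSeries R B := by
  ext d
  simp only [sumSeries, indicatorSeries, PowerSeries.coeff_mul, PowerSeries.coeff_mk]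
  exact sum_congr rfl fun s _ => Set.indicator_prod_one

theorem indicatorSeries_image_mul [CommRing R] {c : ℕ} (hc : c ≠ 0) (A : Set ℕ) :
    indicatorSeries R ((c * ·) '' A) = PowerSeries.expand c hc (indicatorSeries R A) := by
  ext n
  rw [PowerSeries.coeff_expand]
  split_ifs with hdvd
  · obtain ⟨m, rfl⟩ := hdvd
    rw [Nat.mul_div_cancel_left m (Nat.pos_of_ne_zero hc)]
    simp only [indicatorSeries, PowerSeries.coeff_mk]
    exact Set.indicator_image (f := 1) (mul_right_injective₀ hc)
  · rw [indicatorSeries, PowerSeries.coeff_mk]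
    refine Set.indicator_of_notMem ?_ _
    rintro ⟨m, -, rfl⟩
    exact hdvd (dvd_mul_right c m)

theorem indicatorSeries_singleton_zero [Semiring R] : indicatorSeries R {0} = 1 := by
  ext n
  simp [indicatorSeries, PowerSeries.coeff_one, Pi.single_apply]

theorem indicatorSeries_univ_mul_one_sub [CommRing R] :
    indicatorSeries R Set.univ * (1 - PowerSeries.X) = 1 := by
  rw [indicatorSeries, Set.indicator_univ, PowerSeries.mk_one_mul_one_sub_eq_one]

theorem indicatorSeries_mul_one_sub_X_pow [Ring R] {A : Set ℕ} [DecidablePred (· ∈ A)]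
    {N : ℕ} (hA : ∀ n, n + N ∈ A ↔ n ∈ A) :
    indicatorSeries R A * (1 - PowerSeries.X ^ N) =
      ∑ n ∈ range N with n ∈ A, PowerSeries.X ^ n := by
  ext n
  rw [mul_sub, mul_one, map_sub, PowerSeries.coeff_mul_X_pow', map_sum]
  simp only [indicatorSeries, PowerSeries.coeff_mk, PowerSeries.coeff_X_pow,
    Finset.sum_ite_eq, mem_filter, mem_range, Set.indicator_apply]
  rcases lt_or_ge n N with hn | hn
  · simp [hn, hn.not_ge]
  · obtain ⟨m, rfl⟩ := Nat.exists_eq_add_of_le' hn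
    simp [hA]

theorem indicatorSeries_mod_eq_one_mul_one_sub [Ring R] {q : ℕ} (hq : 2 ≤ q) :
    indicatorSeries R {m | m % q = 1} * (1 - PowerSeries.X ^ q) = PowerSeries.X := by
  have hrange : {m ∈ range q | m ∈ {m | m % q = 1}} = {1} := by
    ext m
    simp only [mem_filter, mem_range, Set.mem_ofPred_eq, mem_singleton]
    constructor
    · rintro ⟨hm, hmod⟩
      rwa [Nat.mod_eq_of_lt hm] at hmod
    · rintro rfl
      exact ⟨hq, Nat.mod_eq_of_lt hq⟩
  rw [indicatorSeries_mul_one_sub_X_pow fun m => by simp, hrange, sum_singleton, pow_one]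

theorem indicatorSeries_mod_ne_one_mul_one_sub [Ring R] {q : ℕ} (hq : 2 ≤ q) :
    indicatorSeries R {m | m % q = 1}ᶜ * (1 - PowerSeries.X ^ q) =
      1 + ∑ j ∈ Icc 2 (q - 1), PowerSeries.X ^ j := by
  have hrange : {m ∈ range q | m ∈ {m | m % q = 1}ᶜ} = insert 0 (Icc 2 (q - 1)) := by
    ext m
    simp only [mem_filter, mem_range, Set.mem_compl_iff, Set.mem_ofPred_eq, mem_insert, mem_Icc]
    constructor
    · rintro ⟨hm, hmod⟩
      rw [Nat.mod_eq_of_lt hm] at hmod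
      omega
    · intro hm
      have hlt : m < q := by omega
      rw [Nat.mod_eq_of_lt hlt]
      omega
  rw [indicatorSeries_mul_one_sub_X_pow fun m => by simp, hrange, sum_insert (by simp), pow_zero]

theorem expand_eq_mul_one_sub_X_pow_inv {K : Type*} [Field K] {c n : ℕ} (hc : c ≠ 0) (hn : n ≠ 0)
    {f g : K⟦X⟧} (h : f * (1 - PowerSeries.X ^ n) = g) :
    PowerSeries.expand c hc f = PowerSeries.expand c hc g * (1 - PowerSeries.X ^ (c * n))⁻¹ := by
  rw [PowerSeries.eq_mul_inv_iff_mul_eq (by simp [hc, hn]), ← h, map_mul, map_sub, map_one, map_pow,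
    PowerSeries.expand_X, ← pow_mul]

end GeneratingFunctions

section OrbitBasis

variable (R : Type*) [CommRing R]

/-- The form `z = x ^ q - x * y ^ (q - 1)` with `x = X 0` and `y = X 1`. Over the field with `q`
elements it is the product of the linear forms `x + c * y`, the orbit of `x` under the unipotent
upper-triangular matrices. -/
noncomputable def orbitForm (q : ℕ) : MvPolynomial (Fin 2) R :=
  MvPolynomial.X 0 ^ q - MvPolynomial.X 0 * MvPolynomial.X 1 ^ (q - 1)

/-- The form `x ^ (i % q) * z ^ (i / q) * y ^ j` of degree `i + j`, where `s = (i, j)` and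
`z = orbitForm R q`; it replaces the monomial `x ^ i * y ^ j` of the standard basis. -/
noncomputable def orbitMonomial (q : ℕ) (s : ℕ × ℕ) : MvPolynomial (Fin 2) R :=
  MvPolynomial.X 0 ^ (s.1 % q) * orbitForm R q ^ (s.1 / q) * MvPolynomial.X 1 ^ s.2

variable {R} {q : ℕ}

theorem orbitMonomial_add_mul {k : ℕ} (hk : k < q) (l j : ℕ) :
    orbitMonomial R q (k + q * l, j) =
      MvPolynomial.X 0 ^ k * orbitForm R q ^ l * MvPolynomial.X 1 ^ j := by
  rw [orbitMonomial, Nat.add_mul_mod_self_left, Nat.mod_eq_of_lt hk,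
    Nat.add_mul_div_left _ _ (Nat.zero_lt_of_lt hk), Nat.div_eq_of_lt hk, zero_add]

theorem orbitForm_isHomogeneous (hq : q ≠ 0) : (orbitForm R q).IsHomogeneous q := by
  apply (MvPolynomial.isHomogeneous_X_pow 0 q).sub
  simpa only [Nat.add_sub_of_le (Nat.one_le_iff_ne_zero.mpr hq)] using
    (MvPolynomial.isHomogeneous_X R (0 : Fin 2)).mul (MvPolynomial.isHomogeneous_X_pow 1 (q - 1))

theorem orbitMonomial_isHomogeneous (hq : q ≠ 0) (s : ℕ × ℕ) :
    (orbitMonomial R q s).IsHomogeneous (s.1 + s.2) := by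
  simpa only [orbitMonomial, Nat.mod_add_div] using
    ((MvPolynomial.isHomogeneous_X_pow 0 (s.1 % q)).mul
    ((orbitForm_isHomogeneous hq).pow (s.1 / q))).mul (MvPolynomial.isHomogeneous_X_pow 1 s.2)

theorem finSuccEquiv_X_one :
    finSuccEquiv R 1 (MvPolynomial.X 1) = Polynomial.C (MvPolynomial.X 0) := by
  rw [← Fin.succ_zero_eq_one, finSuccEquiv_X_succ]

theorem finSuccEquiv_orbitForm : finSuccEquiv R 1 (orbitForm R q) =
    Polynomial.X ^ q - Polynomial.C (MvPolynomial.X 0 ^ (q - 1)) * Polynomial.X := by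
  simp only [orbitForm, map_sub, map_mul, map_pow, finSuccEquiv_X_zero, finSuccEquiv_X_one,
    mul_comm]

theorem finSuccEquiv_orbitMonomial (s : ℕ × ℕ) : finSuccEquiv R 1 (orbitMonomial R q s) =
    (MvPolynomial.X 0 ^ s.2 : MvPolynomial (Fin 1) R) •
      finSuccEquiv R 1 (orbitMonomial R q (s.1, 0)) := by
  simp only [orbitMonomial, map_mul, map_pow, finSuccEquiv_X_one, pow_zero, mul_one,
    Polynomial.smul_eq_C_mul, mul_comm]

theorem monic_finSuccEquiv_orbitForm (hq : 2 ≤ q) : (finSuccEquiv R 1 (orbitForm R q)).Monic := by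
  rw [finSuccEquiv_orbitForm]
  exact Polynomial.monic_X_pow_sub
    ((Polynomial.degree_C_mul_X_le _).trans_lt (by exact_mod_cast hq))

theorem natDegree_finSuccEquiv_orbitForm [Nontrivial R] (hq : 2 ≤ q) :
    (finSuccEquiv R 1 (orbitForm R q)).natDegree = q := by
  have hlower : (Polynomial.C (MvPolynomial.X 0 ^ (q - 1) : MvPolynomial (Fin 1) R) *
      Polynomial.X).degree < (Polynomial.X ^ q : Polynomial (MvPolynomial (Fin 1) R)).degree :=
    (Polynomial.degree_C_mul_X_le _).trans_lt
      (by rw [Polynomial.degree_X_pow]; exact_mod_cast hq)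
  rw [finSuccEquiv_orbitForm]
  exact Polynomial.natDegree_eq_of_degree_eq_some
    ((Polynomial.degree_sub_eq_left_of_degree_lt hlower).trans (Polynomial.degree_X_pow q))

theorem monic_finSuccEquiv_orbitMonomial (hq : 2 ≤ q) (i : ℕ) :
    (finSuccEquiv R 1 (orbitMonomial R q (i, 0))).Monic := by
  simp only [orbitMonomial, map_mul, map_pow, finSuccEquiv_X_zero, pow_zero, mul_one]
  exact (Polynomial.monic_X_pow _).mul ((monic_finSuccEquiv_orbitForm hq).pow _)

theorem degree_finSuccEquiv_orbitMonomial [Nontrivial R] (hq : 2 ≤ q) (i : ℕ) :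
    (finSuccEquiv R 1 (orbitMonomial R q (i, 0))).degree = i := by
  have hmonic := monic_finSuccEquiv_orbitForm (R := R) hq
  simp only [orbitMonomial, map_mul, map_pow, finSuccEquiv_X_zero, pow_zero, mul_one]
  rw [(hmonic.pow _).degree_mul, Polynomial.degree_X_pow,
    Polynomial.degree_eq_natDegree (hmonic.pow _).ne_zero,
    hmonic.natDegree_pow, natDegree_finSuccEquiv_orbitForm hq]
  exact_mod_cast Nat.mod_add_div' i q

variable (R) in
/-- The polynomials `x ^ (i % q) * z ^ (i / q)` as a sequence of polynomials in `x` over `R[y]`, the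
`i`-th one being of degree `i`. -/
noncomputable def orbitSequence [Nontrivial R] (hq : 2 ≤ q) :
    Polynomial.Sequence (MvPolynomial (Fin 1) R) where
  elems' i := finSuccEquiv R 1 (orbitMonomial R q (i, 0))
  degree_eq' := degree_finSuccEquiv_orbitMonomial hq

theorem isUnit_leadingCoeff_orbitSequence [Nontrivial R] (hq : 2 ≤ q) (i : ℕ) :
    IsUnit (orbitSequence R hq i).leadingCoeff := by
  have hmonic : (orbitSequence R hq i).Monic := monic_finSuccEquiv_orbitMonomial hq i
  rw [hmonic.leadingCoeff]
  exact isUnit_one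

variable (R) in
/-- The basis of `R[x, y]` formed by the polynomials `orbitMonomial R q s`, obtained from the
`R[y]`-basis `orbitSequence` of `R[y][x]` and the `R`-basis of monomials of `R[y]`. -/
noncomputable def orbitBasis [IsDomain R] (hq : 2 ≤ q) :
    Module.Basis (ℕ × ℕ) R (MvPolynomial (Fin 2) R) :=
  ((((basisMonomials (Fin 1) R).reindex (Finsupp.uniqueEquiv 0)).smulTower
    ((orbitSequence R hq).basis (isUnit_leadingCoeff_orbitSequence hq))).reindex
      (Equiv.prodComm ℕ ℕ)).map (finSuccEquiv R 1).symm.toLinearEquiv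

theorem coe_orbitBasis [IsDomain R] (hq : 2 ≤ q) : ⇑(orbitBasis R hq) = orbitMonomial R q := by
  funext s
  have hsmul : MvPolynomial.monomial (Finsupp.single (0 : Fin 1) s.2) (1 : R) •
      orbitSequence R hq s.1 = finSuccEquiv R 1 (orbitMonomial R q s) := by
    rw [finSuccEquiv_orbitMonomial s, MvPolynomial.X_pow_eq_monomial]
    rfl
  simp [orbitBasis, hsmul]

end OrbitBasis

/-- The exponents `s` for which the classes of the polynomials `orbitMonomial F q s` form a basis of
the cofixed space of the Borel subgroup. -/
def cofixedExponents (q : ℕ) : Set (ℕ × ℕ) :=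
  {s | q - 1 ∣ s.1 ∧ q - 1 ∣ s.2 ∧ (s.1 % q = q - 1 ∨ s.2 = 0)}

section Action

variable {q : ℕ} {F : Type} [Field F] {M : Matrix (Fin 2) (Fin 2) F}

theorem lsub_X_zero : lsub M (MvPolynomial.X 0) =
    M 0 0 • MvPolynomial.X 0 + M 0 1 • MvPolynomial.X 1 := by
  simp [lsub, MvPolynomial.smul_eq_C_mul]

theorem lsub_X_one (hM : M 1 0 = 0) :
    lsub M (MvPolynomial.X 1) = M 1 1 • MvPolynomial.X 1 := by
  simp [lsub, hM, MvPolynomial.smul_eq_C_mul]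

theorem lsub_sub_self_mem_NB (hM : M 1 0 = 0) (hdet : M.det ≠ 0)
    (f : MvPolynomial (Fin 2) F) : lsub M f - f ∈ NB F :=
  Submodule.subset_span ⟨GeneralLinearGroup.mkOfDetNeZero M hdet, hM, f, rfl⟩

theorem NB_le_of_basis {ι : Type*} (b : Module.Basis ι F (MvPolynomial (Fin 2) F))
    {N : Submodule F (MvPolynomial (Fin 2) F)}
    (hN : ∀ M : Matrix (Fin 2) (Fin 2) F, M 1 0 = 0 → M.det ≠ 0 → ∀ i, lsub M (b i) - b i ∈ N) :
    NB F ≤ N := by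
  rw [NB, Submodule.span_le]
  rintro _ ⟨g, hg, f, rfl⟩
  have hcomap : Submodule.span F (Set.range b) ≤
      N.comap ((lsub (g : Matrix (Fin 2) (Fin 2) F)).toLinearMap - LinearMap.id) := by
    rw [Submodule.span_le]
    rintro _ ⟨i, rfl⟩
    exact hN g hg (GeneralLinearGroup.det_ne_zero g) i
  exact hcomap (b.span_eq ▸ Submodule.mem_top)

variable [Fintype F]

theorem lsub_orbitForm (hF : Fintype.card F = q) (h10 : M 1 0 = 0) (h11 : M 1 1 ≠ 0) :
    lsub M (orbitForm F q) = M 0 0 ^ q • orbitForm F q := by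
  have hfrob : (M 0 0 • MvPolynomial.X 0 + M 0 1 • MvPolynomial.X 1 : MvPolynomial (Fin 2) F) ^ q =
      M 0 0 • MvPolynomial.X 0 ^ q + M 0 1 • MvPolynomial.X 1 ^ q := by
    have hadd := map_add (FiniteField.frobeniusAlgHom F (MvPolynomial (Fin 2) F))
      (M 0 0 • MvPolynomial.X 0) (M 0 1 • MvPolynomial.X 1)
    rw [map_smul, map_smul] at hadd
    simpa only [FiniteField.coe_frobeniusAlgHom, hF] using hadd
  have hcard : ∀ a : F, a ^ q = a := hF ▸ FiniteField.pow_card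
  have hunit : M 1 1 ^ (q - 1) = 1 := hF ▸ FiniteField.pow_card_sub_one_eq_one _ h11
  have hy : (MvPolynomial.X 1 : MvPolynomial (Fin 2) F) ^ q =
      MvPolynomial.X 1 * MvPolynomial.X 1 ^ (q - 1) :=
    (mul_pow_sub_one (hF ▸ Fintype.card_ne_zero) _).symm
  rw [orbitForm, map_sub, map_mul, map_pow, map_pow, lsub_X_zero, lsub_X_one h10, hfrob, smul_pow,
    hunit, one_smul, hcard, hy]
  simp only [MvPolynomial.smul_eq_C_mul]
  ring

theorem lsub_orbitMonomial (hF : Fintype.card F = q) (h10 : M 1 0 = 0) (h11 : M 1 1 ≠ 0)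
    {k : ℕ} (hk : k < q) (l j : ℕ) :
    lsub M (orbitMonomial F q (k + q * l, j)) =
      ∑ n ∈ range k, ((k.choose n : F) * M 0 0 ^ (n + q * l) * M 0 1 ^ (k - n) * M 1 1 ^ j) •
        orbitMonomial F q (n + q * l, j + (k - n)) +
      (M 0 0 ^ (k + q * l) * M 1 1 ^ j) • orbitMonomial F q (k + q * l, j) := by
  rw [orbitMonomial_add_mul hk, map_mul, map_mul, map_pow, map_pow, map_pow, lsub_X_zero,
    lsub_X_one h10, lsub_orbitForm hF h10 h11, add_pow, sum_range_succ, add_mul, add_mul, sum_mul,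
    sum_mul]
  congr 1
  · refine sum_congr rfl fun n hn => ?_
    rw [orbitMonomial_add_mul ((mem_range.mp hn).trans hk)]
    simp only [MvPolynomial.smul_eq_C_mul, C_mul, C_pow, map_natCast]
    ring
  · simp only [MvPolynomial.smul_eq_C_mul, C_mul, C_pow, Nat.sub_self, Nat.choose_self,
      Nat.cast_one]
    ring

theorem lsub_orbitMonomial_of_diagonal (hF : Fintype.card F = q) (h10 : M 1 0 = 0)
    (h01 : M 0 1 = 0) (h11 : M 1 1 ≠ 0) (s : ℕ × ℕ) :
    lsub M (orbitMonomial F q s) = (M 0 0 ^ s.1 * M 1 1 ^ s.2) • orbitMonomial F q s := by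
  have hexp := lsub_orbitMonomial hF h10 h11 (Nat.mod_lt s.1 (hF ▸ Fintype.card_pos)) (s.1 / q) s.2
  rwa [sum_eq_zero, zero_add, Nat.mod_add_div] at hexp
  intro n hn
  rw [h01, zero_pow (Nat.sub_ne_zero_of_lt (mem_range.mp hn)), mul_zero, zero_mul, zero_smul]

theorem orbitMonomial_mem_NB_of_pow_mul_pow_ne_one (hF : Fintype.card F = q) {s : ℕ × ℕ} {a d : F}
    (ha : a ≠ 0) (hd : d ≠ 0) (hs : a ^ s.1 * d ^ s.2 ≠ 1) : orbitMonomial F q s ∈ NB F := by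
  have hmem := lsub_sub_self_mem_NB (M := !![a, 0; 0, d]) rfl (by simp [ha, hd])
    (orbitMonomial F q s)
  rw [lsub_orbitMonomial_of_diagonal hF rfl rfl hd] at hmem
  rw [← Submodule.smul_mem_iff _ (sub_ne_zero.mpr hs), sub_smul, one_smul]
  exact hmem

theorem exists_pow_ne_one (hF : Fintype.card F = q) {n : ℕ} (hn : ¬ q - 1 ∣ n) :
    ∃ a : F, a ≠ 0 ∧ a ^ n ≠ 1 := by
  classical
  rw [← hF, ← FiniteField.forall_pow_eq_one_iff F, not_forall] at hn
  obtain ⟨u, hu⟩ := hn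
  exact ⟨u, u.ne_zero, fun h => hu (Units.ext (by simpa using h))⟩

theorem orbitMonomial_mem_NB_of_not_dvd (hF : Fintype.card F = q) {s : ℕ × ℕ}
    (hs : ¬ (q - 1 ∣ s.1 ∧ q - 1 ∣ s.2)) : orbitMonomial F q s ∈ NB F := by
  rcases not_and_or.mp hs with h1 | h2
  · obtain ⟨a, ha, hpow⟩ := exists_pow_ne_one hF h1
    exact orbitMonomial_mem_NB_of_pow_mul_pow_ne_one hF ha one_ne_zero (by simpa using hpow)
  · obtain ⟨d, hd, hpow⟩ := exists_pow_ne_one hF h2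
    exact orbitMonomial_mem_NB_of_pow_mul_pow_ne_one hF one_ne_zero hd (by simpa using hpow)

theorem sum_choose_smul_orbitMonomial_mem_NB (hF : Fintype.card F = q) {k : ℕ} (hk : k < q)
    (l j : ℕ) : ∑ n ∈ range k, (k.choose n : F) • orbitMonomial F q (n + q * l, j + (k - n)) ∈
      NB F := by
  have hmem := lsub_sub_self_mem_NB (M := !![1, 1; 0, (1 : F)]) rfl (by simp)
    (orbitMonomial F q (k + q * l, j))
  rw [lsub_orbitMonomial hF rfl one_ne_zero hk] at hmem
  simpa using hmem

theorem orbitMonomial_mem_NB_of_mod_lt (hF : Fintype.card F = q) {s : ℕ × ℕ}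
    (h1 : s.1 % q < q - 1) (h2 : s.2 ≠ 0) : orbitMonomial F q s ∈ NB F := by
  obtain ⟨i, j⟩ := s
  by_cases hdvd : q - 1 ∣ i ∧ q - 1 ∣ j
  swap
  · exact orbitMonomial_mem_NB_of_not_dvd hF hdvd
  set k := i % q
  set l := i / q
  have hi : i = k + q * l := (Nat.mod_add_div i q).symm
  have hj : j - (q - 1 - k) + (q - 1 - k) = j := by
    have := Nat.le_of_dvd (Nat.pos_of_ne_zero h2) hdvd.2
    omega
  -- As `n` runs over `range (q - 1)`, the exponent `n + q * l` is divisible by `q - 1` only for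
  -- `n = k`, so all other terms of this relation are already known to lie in `NB F`.
  have hsum := sum_choose_smul_orbitMonomial_mem_NB hF (k := q - 1) (by omega) l
    (j - (q - 1 - k))
  have hrest : ∑ n ∈ (range (q - 1)).erase k, ((q - 1).choose n : F) •
      orbitMonomial F q (n + q * l, j - (q - 1 - k) + (q - 1 - n)) ∈ NB F := by
    refine Submodule.sum_mem _ fun n hn => Submodule.smul_mem _ _ <|
      orbitMonomial_mem_NB_of_not_dvd hF fun hn_dvd => ?_
    rw [mem_erase, mem_range] at hn
    have hmod : n + q * l ≡ k + q * l [MOD q - 1] :=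
      (Nat.modEq_zero_iff_dvd.mpr hn_dvd.1).trans (Nat.modEq_zero_iff_dvd.mpr (hi ▸ hdvd.1)).symm
    exact hn.1 ((hmod.add_right_cancel' _).eq_of_lt_of_lt hn.2 h1)
  rw [← add_sum_erase _ _ (mem_range.mpr h1), Submodule.add_mem_iff_left _ hrest, hj, ← hi] at hsum
  have hchoose : ((q - 1).choose k : F) ≠ 0 :=
    hF ▸ natCast_choose_card_sub_one_ne_zero (by omega)
  exact (Submodule.smul_mem_iff _ hchoose).mp hsum

theorem orbitMonomial_mem_NB (hF : Fintype.card F = q) {s : ℕ × ℕ}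
    (hs : s ∉ cofixedExponents q) : orbitMonomial F q s ∈ NB F := by
  by_cases hdvd : q - 1 ∣ s.1 ∧ q - 1 ∣ s.2
  · have hmod : s.1 % q < q := Nat.mod_lt _ (hF ▸ Fintype.card_pos)
    have hor : ¬ (s.1 % q = q - 1 ∨ s.2 = 0) := fun h => hs ⟨hdvd.1, hdvd.2, h⟩
    exact orbitMonomial_mem_NB_of_mod_lt hF (by omega) (by tauto)
  · exact orbitMonomial_mem_NB_of_not_dvd hF hdvd

theorem pow_mul_pow_eq_one_of_mem_cofixedExponents (hF : Fintype.card F = q) {s : ℕ × ℕ}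
    (hs : s ∈ cofixedExponents q) {a d : F} (ha : a ≠ 0) (hd : d ≠ 0) : a ^ s.1 * d ^ s.2 = 1 := by
  rw [orderOf_dvd_iff_pow_eq_one.mp
      ((orderOf_dvd_of_pow_eq_one (hF ▸ FiniteField.pow_card_sub_one_eq_one a ha)).trans hs.1),
    orderOf_dvd_iff_pow_eq_one.mp
      ((orderOf_dvd_of_pow_eq_one (hF ▸ FiniteField.pow_card_sub_one_eq_one d hd)).trans hs.2.1),
    one_mul]

theorem notMem_cofixedExponents_of_lt {k n : ℕ} (hk : k < q) (hn : n < k) (l j : ℕ) :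
    (n + q * l, j + (k - n)) ∉ cofixedExponents q := by
  rintro ⟨-, -, h⟩
  rw [Nat.add_mul_mod_self_left, Nat.mod_eq_of_lt (hn.trans hk)] at h
  omega

theorem lsub_orbitMonomial_sub_self_mem_span (hF : Fintype.card F = q) (h10 : M 1 0 = 0)
    (hdet : M.det ≠ 0) (s : ℕ × ℕ) : lsub M (orbitMonomial F q s) - orbitMonomial F q s ∈
      Submodule.span F (orbitMonomial F q '' (cofixedExponents q)ᶜ) := by
  rw [det_fin_two, h10, mul_zero, sub_zero, mul_ne_zero_iff] at hdet
  have hk : s.1 % q < q := Nat.mod_lt _ (hF ▸ Fintype.card_pos)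
  have hexp := lsub_orbitMonomial hF h10 hdet.2 hk (s.1 / q) s.2
  rw [Nat.mod_add_div] at hexp
  have hlower : ∀ n ∈ range (s.1 % q), orbitMonomial F q (n + q * (s.1 / q), s.2 + (s.1 % q - n)) ∈
      Submodule.span F (orbitMonomial F q '' (cofixedExponents q)ᶜ) := fun n hn =>
    Submodule.subset_span ⟨_, notMem_cofixedExponents_of_lt hk (mem_range.mp hn) _ _, rfl⟩
  have htop : (M 0 0 ^ s.1 * M 1 1 ^ s.2 - 1) • orbitMonomial F q s ∈
      Submodule.span F (orbitMonomial F q '' (cofixedExponents q)ᶜ) := by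
    by_cases hs : s ∈ cofixedExponents q
    · rw [pow_mul_pow_eq_one_of_mem_cofixedExponents hF hs hdet.1 hdet.2, sub_self, zero_smul]
      exact zero_mem _
    · exact Submodule.smul_mem _ _ (Submodule.subset_span ⟨s, hs, rfl⟩)
  rw [sub_smul, one_smul] at htop
  rw [hexp, add_sub_assoc]
  exact add_mem (Submodule.sum_mem _ fun n hn => Submodule.smul_mem _ _ (hlower n hn)) htop

theorem NB_eq_span_image (hF : Fintype.card F = q) :
    NB F = Submodule.span F (orbitMonomial F q '' (cofixedExponents q)ᶜ) := by
  have hq : 2 ≤ q := hF ▸ Fintype.one_lt_card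
  apply le_antisymm
  · apply NB_le_of_basis (orbitBasis F hq)
    rw [coe_orbitBasis]
    exact fun M h10 hdet s => lsub_orbitMonomial_sub_self_mem_span hF h10 hdet s
  · rw [Submodule.span_le]
    rintro _ ⟨s, hs, rfl⟩
    exact orbitMonomial_mem_NB hF hs

theorem hilbQuot_NB (hF : Fintype.card F = q) :
    hilbQuot F (NB F) = sumSeries ℚ (cofixedExponents q) := by
  have hq : 2 ≤ q := hF ▸ Fintype.one_lt_card
  ext d
  have hdeg (s : ℕ × ℕ) : (orbitBasis F hq s).IsHomogeneous (s.1 + s.2) := by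
    rw [coe_orbitBasis]
    exact orbitMonomial_isHomogeneous (by omega) s
  rw [hilbQuot, PowerSeries.coeff_mk, coeff_sumSeries, NB_eq_span_image hF, ← coe_orbitBasis hq,
    homogeneousSubmodule_eq_span_image _ hdeg, finrank_quotient_comap_subtype_span_image,
    Set.sdiff_compl]

end Action

section Counting

variable {R : Type*}

theorem pred_mul_mod_self_eq_pred_iff {q : ℕ} (hq : 2 ≤ q) (m : ℕ) :
    (q - 1) * m % q = q - 1 ↔ m % q = 1 := by
  have hcoprime : Nat.gcd q (q - 1) = 1 := (Nat.coprime_self_sub_right (by omega)).mpr (by simp)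
  have hmul : (q - 1) * m ≡ (q - 1) * 1 [MOD q] ↔ m ≡ 1 [MOD q] :=
    ⟨Nat.ModEq.cancel_left_of_coprime hcoprime, Nat.ModEq.mul_left _⟩
  rwa [Nat.ModEq, Nat.ModEq, mul_one, Nat.mod_eq_of_lt (by omega : q - 1 < q),
    Nat.mod_eq_of_lt (by omega : 1 < q)] at hmul

theorem cofixedExponents_eq_union {q : ℕ} (hq : 2 ≤ q) :
    cofixedExponents q =
      (((q - 1) * ·) '' {m | m % q = 1}) ×ˢ (((q - 1) * ·) '' Set.univ) ∪
        (((q - 1) * ·) '' {m | m % q = 1}ᶜ) ×ˢ {0} := by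
  ext ⟨i, j⟩
  constructor
  · rintro ⟨⟨m, rfl⟩, ⟨n, rfl⟩, h⟩
    rw [pred_mul_mod_self_eq_pred_iff hq] at h
    by_cases hm : m % q = 1
    · exact Or.inl ⟨⟨m, hm, rfl⟩, ⟨n, trivial, rfl⟩⟩
    · exact Or.inr ⟨⟨m, hm, rfl⟩, h.resolve_left hm⟩
  · rintro (⟨⟨m, hm, rfl⟩, ⟨n, -, rfl⟩⟩ | ⟨⟨m, -, rfl⟩, rfl⟩)
    · exact ⟨dvd_mul_right _ m, dvd_mul_right _ n,
        Or.inl ((pred_mul_mod_self_eq_pred_iff hq m).mpr hm)⟩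
    · exact ⟨dvd_mul_right _ m, dvd_zero _, Or.inr rfl⟩

theorem sumSeries_cofixedExponents [CommRing R] {q : ℕ} (hc : q - 1 ≠ 0) :
    sumSeries R (cofixedExponents q) =
      PowerSeries.expand (q - 1) hc (indicatorSeries R {m | m % q = 1}) *
        PowerSeries.expand (q - 1) hc (indicatorSeries R Set.univ) +
      PowerSeries.expand (q - 1) hc (indicatorSeries R {m | m % q = 1}ᶜ) := by
  have hdisj : Disjoint (((q - 1) * ·) '' {m | m % q = 1}) (((q - 1) * ·) '' {m | m % q = 1}ᶜ) :=
    (Set.disjoint_image_iff (mul_right_injective₀ hc)).mpr disjoint_compl_right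
  rw [cofixedExponents_eq_union (by omega), sumSeries_union (Set.disjoint_prod.mpr (Or.inl hdisj)),
    sumSeries_prod, sumSeries_prod, indicatorSeries_singleton_zero, mul_one,
    indicatorSeries_image_mul hc, indicatorSeries_image_mul hc, indicatorSeries_image_mul hc]

end Counting

end BorelCofixed

/-- Theorem: the Borel-cofixed space `S_B` of `S = F_q[x,y]` has Hilbert series
`t^{q−1}/((1−t^{q−1})(1−t^{q²−q})) + (1 + Σ_{j=2}^{q−1} t^{j(q−1)})/(1−t^{q²−q})`. -/
theorem statement17 (q : ℕ) (hq : IsPrimePow q) (Fq : Type) [Field Fq] [Fintype Fq]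
    (hcard : Fintype.card Fq = q) :
    hilbQuot Fq (NB Fq)
      = (PowerSeries.X : PowerSeries ℚ) ^ (q - 1) *
          ((1 - (PowerSeries.X : PowerSeries ℚ) ^ (q - 1))⁻¹ *
            (1 - (PowerSeries.X : PowerSeries ℚ) ^ (q ^ 2 - q))⁻¹) +
        (1 + ∑ j ∈ Finset.Icc 2 (q - 1), (PowerSeries.X : PowerSeries ℚ) ^ (j * (q - 1))) *
          (1 - (PowerSeries.X : PowerSeries ℚ) ^ (q ^ 2 - q))⁻¹ := by
  have hq2 : 2 ≤ q := hq.two_le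
  have hc : q - 1 ≠ 0 := by omega
  have hq0 : q ≠ 0 := by omega
  have hdeg : (q - 1) * q = q ^ 2 - q := by rw [Nat.sub_one_mul, sq]
  have hone := BorelCofixed.expand_eq_mul_one_sub_X_pow_inv hc hq0
    (BorelCofixed.indicatorSeries_mod_eq_one_mul_one_sub (R := ℚ) hq2)
  have hother := BorelCofixed.expand_eq_mul_one_sub_X_pow_inv hc hq0
    (BorelCofixed.indicatorSeries_mod_ne_one_mul_one_sub (R := ℚ) hq2)
  have huniv := BorelCofixed.expand_eq_mul_one_sub_X_pow_inv hc one_ne_zero (g := (1 : ℚ⟦X⟧))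
    (by rw [pow_one, BorelCofixed.indicatorSeries_univ_mul_one_sub])
  rw [BorelCofixed.hilbQuot_NB hcard, BorelCofixed.sumSeries_cofixedExponents hc, hone, hother,
    huniv, hdeg, mul_one]
  simp only [map_add, map_one, map_sum, map_pow, PowerSeries.expand_X, one_mul, ← pow_mul,
    mul_comm (q - 1)]
  ring
end

section
/- Let q be a prime power, S = F_q[x,y], and G = GL_2(F_q). Then the graded G-cofixed space S_G has Hilbert series Hilb(S_G, t) = 1 + t^{2(q−1)}/(1−t^{q−1}) + t^{2(q²−1)}/((1−t^{q²−1})(1−t^{q²−q})) as an identity in ℤ[[t]]. -/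
open Finset Matrix MvPolynomial PowerSeries

/-!
A homogeneous `f` lies in `N_G` exactly when both the sum of its values at the nonzero vectors and
its transfer `∑ g, g(f)` vanish. Indeed, modulo `N_G` the polynomial `f` equals the sum of its
translates by coset representatives of the Borel subgroup `B`; if the point sum is zero, this new
polynomial is divisible by `y`. Modulo the span of the `b(f) - f` with `b ∈ B`, a polynomial
divisible by `y` is `x ^ (q - 1) * h` for some `B`-invariant `h`, and its transfer over `B` is
`-y ^ (q - 1) * h`, which determines `h`.

Hence `dim (S_G)_d` is the rank of the point sum on `S_d`, which gives `1 + t^{2(q-1)}/(1-t^{q-1})`,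
plus the dimension of the transfers of the polynomials with point sum zero. With `c₀` the Dickson
invariant of degree `q² - 1`, these transfers form the ideal `c₀² S^G` of the invariant ring. An
invariant vanishing at `(1, 0)` is divisible by `c₀`, and an invariant of degree `e` can be nonzero
there only when `q² - q ∣ e`, so the Hilbert series of `S^G` follows by repeatedly dividing by `c₀`.
-/

namespace GLCofixed

noncomputable section

section LinearSubstitution

variable {n : ℕ} {F : Type} [Field F]

theorem lsub_X (g : Matrix (Fin n) (Fin n) F) (i : Fin n) :
    lsub g (MvPolynomial.X i) = ∑ j, g i j • (MvPolynomial.X j : MvPolynomial (Fin n) F) := by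
  simp [lsub, MvPolynomial.smul_eq_C_mul]

theorem lsub_lsub (g h : Matrix (Fin n) (Fin n) F) (f : MvPolynomial (Fin n) F) :
    lsub g (lsub h f) = lsub (h * g) f := by
  suffices (lsub g).comp (lsub h) = lsub (h * g) from DFunLike.congr_fun this f
  ext1 i
  simp only [AlgHom.comp_apply, lsub_X, map_sum, map_smul, Finset.smul_sum, smul_smul,
    Matrix.mul_apply, Finset.sum_smul]
  exact Finset.sum_comm

theorem lsub_one (f : MvPolynomial (Fin n) F) : lsub 1 f = f := by
  suffices lsub 1 = AlgHom.id F (MvPolynomial (Fin n) F) from DFunLike.congr_fun this f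
  ext1 i
  simp [lsub_X, Matrix.one_apply]

theorem lsub_inv_lsub (g : GL (Fin n) F) (f : MvPolynomial (Fin n) F) :
    lsub (g⁻¹ : GL (Fin n) F).1 (lsub g.1 f) = f := by
  rw [lsub_lsub, ← Units.val_mul, mul_inv_cancel, Units.val_one, lsub_one]

theorem isHomogeneous_lsub (g : Matrix (Fin n) (Fin n) F) {f : MvPolynomial (Fin n) F} {d : ℕ}
    (hf : f.IsHomogeneous d) : (lsub g f).IsHomogeneous d := by
  rw [← one_mul d]
  exact hf.aeval _ fun i => .sum _ _ _ fun j _ => MvPolynomial.isHomogeneous_C_mul_X _ _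

theorem aeval_lsub (g : Matrix (Fin n) (Fin n) F) (f : MvPolynomial (Fin n) F) (v : Fin n → F) :
    MvPolynomial.aeval v (lsub g f) = MvPolynomial.aeval (g *ᵥ v) f := by
  suffices (MvPolynomial.aeval v).comp (lsub g) = MvPolynomial.aeval (g *ᵥ v) from
    DFunLike.congr_fun this f
  ext1 i
  simp [lsub_X, Matrix.mulVec, dotProduct]

theorem coeff_lsub_diagonal (t : Fin n → F) (f : MvPolynomial (Fin n) F) (u : Fin n →₀ ℕ) :
    (lsub (Matrix.diagonal t) f).coeff u = (∏ i, t i ^ u i) * f.coeff u := by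
  induction f using MvPolynomial.induction_on' with
  | add f g hf hg => simp only [map_add, MvPolynomial.coeff_add, hf, hg, mul_add]
  | monomial w a =>
    have hw : lsub (Matrix.diagonal t) (MvPolynomial.monomial w a) =
        (∏ i, t i ^ w i) • MvPolynomial.monomial w a := by
      rw [MvPolynomial.monomial_eq, Finsupp.prod_fintype _ _ fun _ => pow_zero _]
      simp [lsub_X, Matrix.diagonal_apply, smul_pow, Finset.prod_smul, MvPolynomial.algHom_C]
    rw [hw, MvPolynomial.coeff_smul, MvPolynomial.coeff_monomial, smul_eq_mul]
    split_ifs with h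
    · rw [h]
    · simp only [mul_zero]

theorem sum_eq_of_isHomogeneous {f : MvPolynomial (Fin n) F} {d : ℕ} (hf : f.IsHomogeneous d)
    {u : Fin n →₀ ℕ} (hu : f.coeff u ≠ 0) : ∑ i, u i = d := by
  rw [← hf hu, Finsupp.weight_apply, Finsupp.sum_fintype _ _ (by simp)]
  simp

theorem lsub_scalar {f : MvPolynomial (Fin n) F} {d : ℕ} (hf : f.IsHomogeneous d) (c : F) :
    lsub (Matrix.scalar (Fin n) c) f = c ^ d • f := by
  ext u
  rw [Matrix.scalar_apply, coeff_lsub_diagonal, MvPolynomial.coeff_smul, smul_eq_mul,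
    Finset.prod_pow_eq_pow_sum]
  by_cases hu : f.coeff u = 0
  · rw [hu, mul_zero, mul_zero]
  · rw [sum_eq_of_isHomogeneous hf hu]

theorem aeval_smul_of_isHomogeneous {f : MvPolynomial (Fin n) F} {d : ℕ} (hf : f.IsHomogeneous d)
    (c : F) (v : Fin n → F) :
    MvPolynomial.aeval (c • v) f = c ^ d * MvPolynomial.aeval v f := by
  have hv : Matrix.scalar (Fin n) c *ᵥ v = c • v := by
    ext i
    simp [Matrix.mulVec_diagonal]
  rw [← hv, ← aeval_lsub, lsub_scalar hf, map_smul, smul_eq_mul]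

end LinearSubstitution

section Divisibility

theorem X_pow_dvd_iff {σ R : Type*} [CommSemiring R] {i : σ} {m : ℕ} {f : MvPolynomial σ R} :
    MvPolynomial.X i ^ m ∣ f ↔ ∀ u, f.coeff u ≠ 0 → m ≤ u i := by
  rw [MvPolynomial.X_pow_eq_monomial]
  constructor
  · rintro ⟨k, rfl⟩ u hu
    rw [MvPolynomial.coeff_monomial_mul'] at hu
    simpa using (ite_ne_right_iff.1 hu).1 i
  · intro h
    rw [f.as_sum]
    refine Finset.dvd_sum fun u hu => MvPolynomial.monomial_dvd_monomial.2 ⟨.inr ?_, one_dvd _⟩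
    simpa using h u (MvPolynomial.mem_support_iff.1 hu)

variable {F : Type} [Field F]

theorem X_dvd_sub_aeval_single_smul {f : MvPolynomial (Fin 2) F} {d : ℕ} (hf : f.IsHomogeneous d)
    {i j : Fin 2} (hij : i ≠ j) :
    MvPolynomial.X j ∣
      f - MvPolynomial.aeval (Pi.single i (1 : F)) f •
        (MvPolynomial.X i ^ d : MvPolynomial (Fin 2) F) := by
  set c := f.coeff (Finsupp.single i d) with hc
  have hdvd : MvPolynomial.X j ∣ f - c • (MvPolynomial.X i ^ d : MvPolynomial (Fin 2) F) := by
    rw [← pow_one (MvPolynomial.X j), X_pow_dvd_iff]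
    intro u hu
    have hsum := sum_eq_of_isHomogeneous
      (hf.sub ((MvPolynomial.homogeneousSubmodule (Fin 2) F d).smul_mem c
        (MvPolynomial.isHomogeneous_X_pow i d))) hu
    by_contra! huj
    have hu_eq : u = Finsupp.single i d := by
      ext k
      rw [Fin.sum_univ_two] at hsum
      fin_cases i <;> fin_cases j <;> fin_cases k <;> simp_all
    rw [hu_eq, MvPolynomial.X_pow_eq_monomial] at hu
    simp [← hc] at hu
  have heval : MvPolynomial.aeval (Pi.single i (1 : F)) f = c := by
    obtain ⟨k, hk⟩ := hdvd
    simpa [hij.symm, sub_eq_zero] using congrArg (MvPolynomial.aeval (Pi.single i (1 : F))) hk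
  rwa [heval]

theorem X_dvd_of_aeval_single_eq_zero {f : MvPolynomial (Fin 2) F} {d : ℕ}
    (hf : f.IsHomogeneous d) {i j : Fin 2} (hij : i ≠ j)
    (h : MvPolynomial.aeval (Pi.single i (1 : F)) f = 0) : MvPolynomial.X j ∣ f := by
  simpa [h] using X_dvd_sub_aeval_single_smul hf hij

theorem isHomogeneous_of_mul {σ R : Type*} [CommRing R] [IsDomain R] {f g : MvPolynomial σ R}
    {a e : ℕ} (hf : f.IsHomogeneous a) (hf0 : f ≠ 0) (hfg : (f * g).IsHomogeneous e)
    (hg0 : g ≠ 0) : a ≤ e ∧ g.IsHomogeneous (e - a) := by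
  have hmem : f * g ∈ MvPolynomial.homogeneousSubmodule σ R e := hfg
  let _ := MvPolynomial.gradedAlgebra (σ := σ) (R := R)
  have ha : a ≤ e := by
    by_contra ha
    have := DirectSum.coe_decompose_mul_of_left_mem_of_not_le
      (MvPolynomial.homogeneousSubmodule σ R) (b := g) hf ha
    rw [DirectSum.decompose_of_mem_same _ hmem] at this
    exact mul_ne_zero hf0 hg0 this
  refine ⟨ha, ?_⟩
  have := DirectSum.coe_decompose_mul_of_left_mem_of_le
    (MvPolynomial.homogeneousSubmodule σ R) (b := g) hf ha
  rw [DirectSum.decompose_of_mem_same _ hmem] at this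
  rw [mul_left_cancel₀ hf0 this]
  exact (DirectSum.decompose (MvPolynomial.homogeneousSubmodule σ R) g (e - a)).2

end Divisibility

section Subgroups

variable {n : ℕ} {F : Type} [Field F]

/-- The span of the elements `g(f) - f` with `g ∈ H`; the `H`-cofixed space is the quotient by
it. -/
def cofixedKer (H : Subgroup (GL (Fin n) F)) : Submodule F (MvPolynomial (Fin n) F) :=
  Submodule.span F {h | ∃ g ∈ H, ∃ f, h = lsub g.1 f - f}

/-- The ring of polynomials invariant under `H`. -/
def invariants (H : Subgroup (GL (Fin n) F)) : Subalgebra F (MvPolynomial (Fin n) F) :=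
  ⨅ g ∈ H, AlgHom.equalizer (lsub g.1) (AlgHom.id F _)

/-- The transfer (trace) `f ↦ ∑ g ∈ H, g(f)` of a finite group `H`. -/
def transfer (H : Subgroup (GL (Fin n) F)) [Fintype H] :
    MvPolynomial (Fin n) F →ₗ[F] MvPolynomial (Fin n) F :=
  ∑ g : H, (lsub g.1.1).toLinearMap

variable {H K : Subgroup (GL (Fin n) F)} {f h : MvPolynomial (Fin n) F}

theorem cofixedKer_top : cofixedKer (⊤ : Subgroup (GL (Fin 2) F)) = NG F := by
  simp only [cofixedKer, NG, Subgroup.mem_top, true_and]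

theorem cofixedKer_mono (hHK : H ≤ K) : cofixedKer H ≤ cofixedKer K :=
  Submodule.span_mono fun _ ⟨g, hg, f, hf⟩ => ⟨g, hHK hg, f, hf⟩

theorem lsub_sub_mem_cofixedKer {g : GL (Fin n) F} (hg : g ∈ H) (f : MvPolynomial (Fin n) F) :
    lsub g.1 f - f ∈ cofixedKer H :=
  Submodule.subset_span ⟨g, hg, f, rfl⟩

theorem mem_cofixedKer_of_lsub_eq_smul {g : GL (Fin n) F} (hg : g ∈ H) {c : F} (hc : c ≠ 1)
    (hf : lsub g.1 f = c • f) : f ∈ cofixedKer H := by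
  have h : (c - 1) • f ∈ cofixedKer H := by
    rw [sub_smul, one_smul, ← hf]
    exact lsub_sub_mem_cofixedKer hg f
  exact (Submodule.smul_mem_iff _ (sub_ne_zero.2 hc)).1 h

theorem mem_invariants : f ∈ invariants H ↔ ∀ g ∈ H, lsub g.1 f = f := by
  simp [invariants, Algebra.mem_iInf, AlgHom.mem_equalizer]

theorem invariants_anti (hHK : H ≤ K) : invariants K ≤ invariants H :=
  fun _ hf => mem_invariants.2 fun g hg => mem_invariants.1 hf g (hHK hg)

theorem mem_invariants_of_mul_mem (hf : f ∈ invariants H) (hf0 : f ≠ 0)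
    (hfh : f * h ∈ invariants H) : h ∈ invariants H := by
  refine mem_invariants.2 fun g hg => mul_left_cancel₀ hf0 ?_
  rw [← mem_invariants.1 hfh g hg, map_mul, mem_invariants.1 hf g hg]

theorem transfer_apply [Fintype H] (f : MvPolynomial (Fin n) F) :
    transfer H f = ∑ g : H, lsub g.1.1 f := by
  simp [transfer]

theorem transfer_lsub [Fintype H] {g : GL (Fin n) F} (hg : g ∈ H) (f : MvPolynomial (Fin n) F) :
    transfer H (lsub g.1 f) = transfer H f := by
  simp_rw [transfer_apply, lsub_lsub]
  exact Equiv.sum_comp (Equiv.mulLeft (⟨g, hg⟩ : H)) fun k : H => lsub k.1.1 f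

theorem transfer_mem_invariants [Fintype H] (f : MvPolynomial (Fin n) F) :
    transfer H f ∈ invariants H := by
  refine mem_invariants.2 fun g hg => ?_
  simp_rw [transfer_apply, map_sum, lsub_lsub]
  exact Equiv.sum_comp (Equiv.mulRight (⟨g, hg⟩ : H)) fun k : H => lsub k.1.1 f

theorem transfer_eq_zero_of_mem_cofixedKer [Fintype H] (hf : f ∈ cofixedKer H) :
    transfer H f = 0 := by
  suffices cofixedKer H ≤ LinearMap.ker (transfer H) from this hf
  refine Submodule.span_le.2 ?_
  rintro _ ⟨g, hg, f, rfl⟩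
  simp [transfer_lsub hg]

theorem transfer_mul_of_mem_invariants [Fintype H] (hh : h ∈ invariants H)
    (f : MvPolynomial (Fin n) F) : transfer H (f * h) = transfer H f * h := by
  simp_rw [transfer_apply, Finset.sum_mul, map_mul]
  exact Finset.sum_congr rfl fun g _ => by rw [mem_invariants.1 hh g g.2]

theorem isHomogeneous_transfer [Fintype H] {d : ℕ} (hf : f.IsHomogeneous d) :
    (transfer H f).IsHomogeneous d := by
  rw [transfer_apply]
  exact .sum _ _ _ fun g _ => isHomogeneous_lsub _ hf

section Cosets

variable {ι : Type*} [Fintype ι] {r : ι → GL (Fin n) F} [Fintype H]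
  [Fintype (⊤ : Subgroup (GL (Fin n) F))]

theorem transfer_top_eq_transfer_sum (hr : Function.Bijective fun z : ι × H => r z.1 * z.2)
    (f : MvPolynomial (Fin n) F) : transfer ⊤ f = transfer H (∑ i, lsub (r i).1 f) := by
  let e : ι × H ≃ (⊤ : Subgroup (GL (Fin n) F)) :=
    (Equiv.ofBijective _ hr).trans Subgroup.topEquiv.symm.toEquiv
  rw [transfer_apply, ← e.sum_comp, Fintype.sum_prod_type, map_sum]
  refine Finset.sum_congr rfl fun i _ => ?_
  rw [transfer_apply]
  exact Finset.sum_congr rfl fun k _ => (lsub_lsub _ _ _).symm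

theorem transfer_top_eq_sum_lsub_inv (hr : Function.Bijective fun z : ι × H => r z.1 * z.2)
    (f : MvPolynomial (Fin n) F) :
    transfer ⊤ f = ∑ i, lsub (r i)⁻¹.1 (transfer H f) := by
  let e : ι × H ≃ (⊤ : Subgroup (GL (Fin n) F)) :=
    ((Equiv.prodCongrRight fun _ => Equiv.inv H).trans (Equiv.ofBijective _ hr)).trans
      ((Equiv.inv _).trans Subgroup.topEquiv.symm.toEquiv)
  rw [transfer_apply, ← e.sum_comp, Fintype.sum_prod_type]
  refine Finset.sum_congr rfl fun i _ => ?_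
  rw [transfer_apply, map_sum]
  refine Finset.sum_congr rfl fun k _ => ?_
  rw [lsub_lsub, ← Units.val_mul]
  congr 2

end Cosets

end Subgroups

section PowerSums

variable {F : Type*} [Field F] [Fintype F]

local notation "q" => Fintype.card F

theorem sum_pow_eq_ite (i : ℕ) : ∑ a : F, a ^ i = if 0 < i ∧ q - 1 ∣ i then -1 else 0 := by
  classical
  have hunits : ∑ a : Fˣ, (a : F) ^ i = ∑ a ∈ ({0}ᶜ : Finset F), a ^ i :=
    Finset.sum_bij (fun a _ => a) (by simp) (fun _ _ _ _ => Units.ext)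
      (fun a ha => ⟨Units.mk0 a (by simpa using ha), by simp⟩) (by simp)
  rw [Fintype.sum_eq_add_sum_compl 0, ← hunits, FiniteField.sum_pow_units]
  rcases Nat.eq_zero_or_pos i with rfl | hi
  · simp
  · simp [hi, hi.ne']

theorem pow_eq_one_of_dvd {a : F} (ha : a ≠ 0) {i : ℕ} (hi : q - 1 ∣ i) : a ^ i = 1 := by
  obtain ⟨k, rfl⟩ := hi
  rw [pow_mul, FiniteField.pow_card_sub_one_eq_one a ha, one_pow]

theorem exists_pow_ne_one {i : ℕ} (hi : ¬q - 1 ∣ i) : ∃ a : Fˣ, (a : F) ^ i ≠ 1 := by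
  rw [← FiniteField.forall_pow_eq_one_iff F i, not_forall] at hi
  obtain ⟨a, ha⟩ := hi
  exact ⟨a, fun h => ha (Units.ext (by simpa using h))⟩

theorem cast_card_sub_one : ((q - 1 : ℕ) : F) = -1 := by
  simp [Nat.cast_sub Fintype.card_pos]

theorem choose_card_sub_one {s : ℕ} (hs : s < q) : ((q - 1).choose s : F) = (-1) ^ s := by
  induction s with
  | zero => simp
  | succ s ih =>
    obtain ⟨p, _, n, hp, hn⟩ := FiniteField.card' F
    have hdvd : p ∣ Nat.choose q (s + 1) := by
      rw [hn]
      exact hp.dvd_choose_pow (by simp) (by rw [← hn]; exact hs.ne)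
    have hzero : ((Nat.choose (q - 1 + 1) (s + 1) : ℕ) : F) = 0 := by
      rwa [Nat.sub_add_cancel Fintype.card_pos, CharP.cast_eq_zero_iff F p]
    rw [Nat.choose_succ_succ, Nat.cast_add, ih (by lia)] at hzero
    rw [pow_succ]
    linear_combination hzero

variable {A : Type*} [CommRing A] [Algebra F A]

theorem smul_add_smul_pow_card_pow (n : ℕ) (a b : F) (u v : A) :
    (a • u + b • v) ^ q ^ n = a • u ^ q ^ n + b • v ^ q ^ n := by
  have hadd : (a • u + b • v) ^ q ^ n = (a • u) ^ q ^ n + (b • v) ^ q ^ n := by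
    simpa only [AlgHom.coe_pow, FiniteField.coe_frobeniusAlgHom, pow_iterate] using
      map_add (FiniteField.frobeniusAlgHom F A ^ n) (a • u) (b • v)
  rw [hadd, smul_pow, smul_pow, FiniteField.pow_card_pow, FiniteField.pow_card_pow]

theorem sum_pow_smul_add_smul_pow {m : ℕ} (hm : m < q - 1) (u v : A) :
    ∑ c : F, c ^ m • (u + c • v) ^ (q - 1) =
      (-((q - 1).choose m : F)) • (u ^ m * v ^ (q - 1 - m)) := by
  have hexpand (c : F) : c ^ m • (u + c • v) ^ (q - 1) =
      ∑ j ∈ Finset.range (q - 1 + 1), (((q - 1).choose j : F) * c ^ (m + (q - 1 - j))) •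
        (u ^ j * v ^ (q - 1 - j)) := by
    rw [add_pow, Finset.smul_sum]
    refine Finset.sum_congr rfl fun j _ => ?_
    simp only [Algebra.smul_def, map_mul, map_pow, map_natCast, pow_add]
    ring
  simp_rw [hexpand]
  rw [Finset.sum_comm]
  simp_rw [← Finset.sum_smul, ← Finset.mul_sum, sum_pow_eq_ite]
  rw [Finset.sum_eq_single m]
  · rw [if_pos ⟨by lia, by rw [Nat.add_sub_cancel' hm.le]⟩, mul_neg_one]
  · intro j hj hjm
    rw [if_neg, mul_zero, zero_smul]
    rintro ⟨hpos, t, ht⟩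
    rw [Finset.mem_range] at hj
    rcases t with _ | _ | t
    · lia
    · lia
    · have : (q - 1) * 2 ≤ (q - 1) * (t + 2) := Nat.mul_le_mul_left _ (by lia)
      lia
  · exact fun h => absurd (Finset.mem_range.2 (by lia)) h

end PowerSums

section Borel

variable {F : Type} [Field F]

local notation "𝐱" => (MvPolynomial.X 0 : MvPolynomial (Fin 2) F)
local notation "𝐲" => (MvPolynomial.X 1 : MvPolynomial (Fin 2) F)

/-- The Borel subgroup of upper triangular matrices. -/
def borel (F : Type) [Field F] : Subgroup (GL (Fin 2) F) where
  carrier := {g | g 1 0 = 0}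
  mul_mem' {g h} hg hh := by simp_all [Matrix.mul_apply]
  one_mem' := by simp
  inv_mem' {g} hg := by simp_all [Matrix.inv_def, Matrix.adjugate_fin_two]

theorem mem_borel {g : GL (Fin 2) F} : g ∈ borel F ↔ g 1 0 = 0 := Iff.rfl

/-- The upper triangular matrix with diagonal `(a, d)` and corner `c`. -/
def upper (a d : Fˣ) (c : F) : GL (Fin 2) F :=
  .mkOfDetNeZero !![(a : F), c; 0, (d : F)] (by simp [Matrix.det_fin_two])

theorem coe_upper (a d : Fˣ) (c : F) : (upper a d c).1 = !![(a : F), c; 0, (d : F)] := rfl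

theorem coe_upper_self (a : Fˣ) : (upper a a 0).1 = Matrix.scalar (Fin 2) (a : F) := by
  ext i j
  fin_cases i <;> fin_cases j <;> simp [coe_upper]

theorem upper_mem_borel (a d : Fˣ) (c : F) : upper a d c ∈ borel F := by
  simp [mem_borel, coe_upper]

theorem borel_diagonal_ne_zero {b : GL (Fin 2) F} (hb : b ∈ borel F) : b 0 0 ≠ 0 ∧ b 1 1 ≠ 0 := by
  rw [← mul_ne_zero_iff]
  simpa [Matrix.det_fin_two, mem_borel.1 hb] using Matrix.GeneralLinearGroup.det_ne_zero b

/-- An upper triangular matrix is determined by its diagonal and its corner. -/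
def borelEquiv (F : Type) [Field F] : (Fˣ × Fˣ) × F ≃ borel F where
  toFun p := ⟨upper p.1.1 p.1.2 p.2, upper_mem_borel _ _ _⟩
  invFun b := ((.mk0 _ (borel_diagonal_ne_zero b.2).1, .mk0 _ (borel_diagonal_ne_zero b.2).2),
    b.1 0 1)
  left_inv p := by ext <;> simp [coe_upper]
  right_inv b := by
    ext i j
    have := mem_borel.1 b.2
    fin_cases i <;> fin_cases j <;> simp [coe_upper, this]

theorem lsub_X_zero (g : Matrix (Fin 2) (Fin 2) F) : lsub g 𝐱 = g 0 0 • 𝐱 + g 0 1 • 𝐲 := by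
  rw [lsub_X, Fin.sum_univ_two]

theorem lsub_X_one (g : Matrix (Fin 2) (Fin 2) F) : lsub g 𝐲 = g 1 0 • 𝐱 + g 1 1 • 𝐲 := by
  rw [lsub_X, Fin.sum_univ_two]

theorem lsub_borel_X_one {b : GL (Fin 2) F} (hb : b ∈ borel F) : lsub b.1 𝐲 = b 1 1 • 𝐲 := by
  rw [lsub_X_one, mem_borel.1 hb, zero_smul, zero_add]

/-- Representatives of the left cosets of the Borel subgroup: they send the line of `(1, 0)` to
each of the points of the projective line. -/
def lineRep : Option F → GL (Fin 2) F
  | none => 1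
  | some s => ⟨!![s, 1; 1, 0], !![0, 1; 1, -s], by simp [Matrix.one_fin_two],
      by simp [Matrix.one_fin_two]⟩

theorem bijective_lineRep_mul :
    Function.Bijective fun z : Option F × borel F => lineRep z.1 * z.2 := by
  constructor
  · rintro ⟨r, b⟩ ⟨r', b'⟩ h
    obtain rfl : r = r' := by
      have hcol (i : Fin 2) : lineRep r i 0 * b.1 0 0 = lineRep r' i 0 * b'.1 0 0 := by
        simpa [Matrix.mul_apply, Fin.sum_univ_two, mem_borel.1 b.2, mem_borel.1 b'.2]
          using congrArg (fun g : GL (Fin 2) F => g i 0) h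
      have hb := (borel_diagonal_ne_zero b.2).1
      have hb' := (borel_diagonal_ne_zero b'.2).1
      have h0 := hcol 0
      have h1 := hcol 1
      clear h hcol
      rcases r with _ | s <;> rcases r' with _ | s' <;> simp_all [lineRep]
    exact Prod.ext rfl (Subtype.ext (mul_left_cancel h))
  · intro g
    by_cases hg : g 1 0 = 0
    · exact ⟨(none, ⟨g, hg⟩), one_mul g⟩
    · refine ⟨(some (g 0 0 / g 1 0), ⟨(lineRep (some (g 0 0 / g 1 0)))⁻¹ * g, ?_⟩),
        mul_inv_cancel_left _ _⟩
      rw [mem_borel, Units.val_mul, Matrix.mul_apply, Fin.sum_univ_two]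
      change 1 * g 0 0 + -(g 0 0 / g 1 0) * g 1 0 = 0
      rw [neg_mul, div_mul_cancel₀ _ hg, one_mul, add_neg_cancel]

/-- The linear forms, one for each point of the projective line, that vanish on its points. -/
def lineForm : Option F → MvPolynomial (Fin 2) F
  | none => 𝐲
  | some a => 𝐱 - a • 𝐲

theorem lsub_lineRep_inv (r : Option F) : lsub (lineRep r)⁻¹.1 𝐲 = lineForm r := by
  rcases r with _ | a <;> rw [lsub_X_one]
  · simp [lineRep, lineForm]
  · change (1 : F) • 𝐱 + -a • 𝐲 = 𝐱 - a • 𝐲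
    rw [one_smul, neg_smul, sub_eq_add_neg]

theorem irreducible_lsub_X (g : GL (Fin 2) F) (i : Fin 2) :
    Irreducible (lsub g.1 (MvPolynomial.X i)) := by
  let e : MvPolynomial (Fin 2) F ≃ₐ[F] MvPolynomial (Fin 2) F :=
    .ofAlgHom (lsub g.1) (lsub g⁻¹.1)
      (AlgHom.ext fun f => by simpa using lsub_inv_lsub g⁻¹ f)
      (AlgHom.ext fun f => lsub_inv_lsub g f)
  exact (MulEquiv.irreducible_iff e).2 (MvPolynomial.X_prime).irreducible

theorem isRelPrime_lsub_X_one {g h : GL (Fin 2) F} (hgh : h * g⁻¹ ∉ borel F) :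
    IsRelPrime (lsub g.1 𝐲) (lsub h.1 𝐲) := by
  rw [(irreducible_lsub_X g 1).isRelPrime_iff_not_dvd]
  intro hdvd
  have hdvd' := map_dvd (lsub g⁻¹.1) hdvd
  rw [lsub_inv_lsub, lsub_lsub, ← Units.val_mul] at hdvd'
  obtain ⟨k, hk⟩ := hdvd'
  have heval := congrArg (MvPolynomial.aeval (Pi.single 0 1 : Fin 2 → F)) hk
  rw [map_mul, lsub_X_one] at heval
  exact hgh (by simpa [mem_borel] using heval)

theorem isRelPrime_lineForm : Pairwise (Function.onFun IsRelPrime (lineForm (F := F))) := by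
  intro r s hrs
  rw [Function.onFun, ← lsub_lineRep_inv, ← lsub_lineRep_inv]
  refine isRelPrime_lsub_X_one fun hmem => hrs ?_
  refine congrArg Prod.fst (bijective_lineRep_mul.1 (a₁ := (r, 1)) (a₂ := (s, ⟨_, hmem⟩)) ?_)
  simp

variable [Fintype F]

local notation "q" => Fintype.card F

/-- The orbit product of `x` under the unipotent upper triangular matrices. -/
def orbitProd (F : Type) [Field F] [Fintype F] : MvPolynomial (Fin 2) F :=
  ∏ a : F, lineForm (some a)

theorem isHomogeneous_orbitProd : (orbitProd F).IsHomogeneous q := by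
  have h := MvPolynomial.IsHomogeneous.prod Finset.univ (fun a : F => lineForm (some a))
    (fun _ => 1) fun a _ => by
      rw [← lsub_lineRep_inv]
      exact isHomogeneous_lsub _ (MvPolynomial.isHomogeneous_X _ _)
  simpa [orbitProd] using h

theorem prod_lineForm : ∏ r : Option F, lineForm r = 𝐲 * orbitProd F := Fintype.prod_option _

theorem orbitProd_ne_zero : orbitProd F ≠ 0 :=
  Finset.prod_ne_zero_iff.2 fun a _ => lsub_lineRep_inv (some a) ▸ (irreducible_lsub_X _ 1).ne_zero

theorem orbitProd_eq : orbitProd F = 𝐱 ^ q - 𝐱 * 𝐲 ^ (q - 1) := by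
  have hdehom : MvPolynomial.aeval ![Polynomial.X, 1] (orbitProd F) =
      (Polynomial.X ^ q - Polynomial.X : Polynomial F) := by
    have hmonic : (Polynomial.X ^ q - Polynomial.X : Polynomial F).Monic :=
      Polynomial.monic_X_pow_sub (by simpa using Fintype.one_lt_card)
    have hprod := Polynomial.prod_multiset_X_sub_C_of_monic_of_roots_card_eq hmonic (by
      rw [FiniteField.roots_X_pow_card_sub_X,
        FiniteField.X_pow_card_sub_X_natDegree_eq F Fintype.one_lt_card]
      rfl)
    rw [← hprod, FiniteField.roots_X_pow_card_sub_X, Finset.prod_map_val]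
    simp [orbitProd, lineForm, Algebra.smul_def]
  rw [← Polynomial.homogenize_eq_of_isHomogeneous isHomogeneous_orbitProd hdehom,
    Polynomial.homogenize_sub, Polynomial.homogenize_X_pow le_rfl,
    Polynomial.homogenize_X Fintype.card_ne_zero, Nat.sub_self, pow_zero, mul_one]

theorem aeval_single_orbitProd :
    MvPolynomial.aeval (Pi.single 0 1 : Fin 2 → F) (orbitProd F) = 1 := by
  simp [orbitProd, lineForm]

theorem lsub_borel_orbitProd {b : GL (Fin 2) F} (hb : b ∈ borel F) :
    lsub b.1 (orbitProd F) = b 0 0 • orbitProd F := by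
  have hfrob : (b 0 0 • 𝐱 + b 0 1 • 𝐲) ^ q = b 0 0 • 𝐱 ^ q + b 0 1 • 𝐲 ^ q := by
    simpa only [pow_one] using smul_add_smul_pow_card_pow 1 (b 0 0) (b 0 1) 𝐱 𝐲
  have hy : 𝐲 ^ q = 𝐲 * 𝐲 ^ (q - 1) := by rw [← pow_succ', Nat.sub_add_cancel Fintype.card_pos]
  rw [orbitProd_eq, map_sub, map_mul, map_pow, map_pow, lsub_X_zero, lsub_borel_X_one hb,
    hfrob, smul_pow, pow_eq_one_of_dvd (borel_diagonal_ne_zero hb).2 dvd_rfl, hy]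
  simp only [Algebra.smul_def, map_one]
  ring

theorem lsub_borel_monomial {b : GL (Fin 2) F} (hb : b ∈ borel F) (l k : ℕ) :
    lsub b.1 (𝐲 ^ l * orbitProd F ^ k) =
      (b 1 1 ^ l * b 0 0 ^ k) • (𝐲 ^ l * orbitProd F ^ k) := by
  rw [map_mul, map_pow, map_pow, lsub_borel_X_one hb, lsub_borel_orbitProd hb, smul_pow, smul_pow,
    smul_mul_smul_comm]

theorem monomial_mem_invariants_borel {l k : ℕ} (hl : q - 1 ∣ l) (hk : q - 1 ∣ k) :
    𝐲 ^ l * orbitProd F ^ k ∈ invariants (borel F) := by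
  refine mem_invariants.2 fun b hb => ?_
  have hdiag := borel_diagonal_ne_zero hb
  rw [lsub_borel_monomial hb, pow_eq_one_of_dvd hdiag.1 hk, pow_eq_one_of_dvd hdiag.2 hl, one_mul,
    one_smul]

instance [DecidableEq F] : Fintype (borel F) := .ofEquiv _ (borelEquiv F)

theorem transfer_borel_X_zero_pow [DecidableEq F] :
    transfer (borel F) (𝐱 ^ (q - 1)) = -𝐲 ^ (q - 1) := by
  have hunipotent (a : F) : ∑ c : F, (a • 𝐱 + c • 𝐲) ^ (q - 1) = -𝐲 ^ (q - 1) := by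
    simpa using sum_pow_smul_add_smul_pow (m := 0)
      (Nat.sub_pos_of_lt (Fintype.one_lt_card (α := F))) (a • 𝐱) 𝐲
  rw [transfer_apply, ← (borelEquiv F).sum_comp, Fintype.sum_prod_type]
  simp only [borelEquiv, Equiv.coe_fn_mk, map_pow, lsub_X_zero, coe_upper]
  simp only [Matrix.of_apply, Matrix.cons_val, hunipotent]
  rw [Finset.sum_const, Finset.card_univ, Fintype.card_prod, Fintype.card_units,
    ← Nat.cast_smul_eq_nsmul F, Nat.cast_mul, cast_card_sub_one, neg_one_mul, neg_neg, one_smul]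

theorem monomial_mem_cofixedKer_borel_of_not_dvd {m l k : ℕ}
    (h : ¬(q - 1 ∣ l ∧ q - 1 ∣ m + k)) :
    𝐱 ^ m * (𝐲 ^ l * orbitProd F ^ k) ∈ cofixedKer (borel F) := by
  have htorus (a d : Fˣ) : lsub (upper a d 0).1 (𝐱 ^ m * (𝐲 ^ l * orbitProd F ^ k)) =
      ((a : F) ^ (m + k) * (d : F) ^ l) • (𝐱 ^ m * (𝐲 ^ l * orbitProd F ^ k)) := by
    rw [map_mul, map_pow, lsub_X_zero, lsub_borel_monomial (upper_mem_borel a d 0), coe_upper]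
    simp only [Matrix.of_apply, Matrix.cons_val, zero_smul, add_zero, smul_pow, smul_mul_smul_comm]
    congr 1
    ring
  by_cases hl : q - 1 ∣ l
  · obtain ⟨a, ha⟩ := exists_pow_ne_one (F := F) fun hmk => h ⟨hl, hmk⟩
    exact mem_cofixedKer_of_lsub_eq_smul (upper_mem_borel a 1 0) (by simpa using ha) (htorus a 1)
  · obtain ⟨d, hd⟩ := exists_pow_ne_one (F := F) hl
    exact mem_cofixedKer_of_lsub_eq_smul (upper_mem_borel 1 d 0) (by simpa using hd) (htorus 1 d)

theorem monomial_mem_cofixedKer_borel_of_lt {m l : ℕ} (hm : m < q - 1) (hl : q - 1 ≤ l) (k : ℕ) :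
    𝐱 ^ m * (𝐲 ^ l * orbitProd F ^ k) ∈ cofixedKer (borel F) := by
  -- Weighting the shifts `(x + c y) ^ (q - 1)` by `c ^ m` and summing over `c` isolates the single
  -- term `x ^ m * y ^ (q - 1 - m)` of the binomial expansion.
  set w := 𝐲 ^ (l - (q - 1 - m)) * orbitProd F ^ k with hw
  have hmem : ∑ c : F, c ^ m • (lsub (upper 1 1 c).1 (𝐱 ^ (q - 1) * w) - 𝐱 ^ (q - 1) * w) ∈
      cofixedKer (borel F) :=
    Submodule.sum_mem _ fun c _ =>
      Submodule.smul_mem _ _ (lsub_sub_mem_cofixedKer (upper_mem_borel _ _ _) _)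
  have hshift (c : F) : lsub (upper 1 1 c).1 (𝐱 ^ (q - 1) * w) = (𝐱 + c • 𝐲) ^ (q - 1) * w := by
    rw [map_mul, map_pow, lsub_X_zero, hw, lsub_borel_monomial (upper_mem_borel _ _ _), coe_upper]
    simp
  have hpow : 𝐲 ^ l = 𝐲 ^ (q - 1 - m) * 𝐲 ^ (l - (q - 1 - m)) := by
    rw [← pow_add, Nat.add_sub_cancel' (by lia)]
  simp_rw [hshift, smul_sub, ← smul_mul_assoc] at hmem
  rw [Finset.sum_sub_distrib, ← Finset.sum_mul, ← Finset.sum_mul, ← Finset.sum_smul,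
    sum_pow_smul_add_smul_pow hm, FiniteField.sum_pow_lt_card_sub_one F m hm, zero_smul, zero_mul,
    sub_zero, choose_card_sub_one (by lia), smul_mul_assoc,
    Submodule.smul_mem_iff _ (by simp)] at hmem
  rwa [hpow, mul_assoc (𝐲 ^ (q - 1 - m)), ← hw, ← mul_assoc]

theorem span_monomial_orbitProd :
    Submodule.span F {w | ∃ m l k, m < q ∧ w = 𝐱 ^ m * (𝐲 ^ l * orbitProd F ^ k)} = ⊤ := by
  set W := Submodule.span F {w | ∃ m l k, m < q ∧ w = 𝐱 ^ m * (𝐲 ^ l * orbitProd F ^ k)}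
  have hmon (i : ℕ) : ∀ j k, 𝐱 ^ i * (𝐲 ^ j * orbitProd F ^ k) ∈ W := by
    induction i using Nat.strong_induction_on with
    | _ i ih =>
      intro j k
      by_cases hi : i < q
      · exact Submodule.subset_span ⟨i, j, k, hi, rfl⟩
      · have hreduce : 𝐱 ^ i * (𝐲 ^ j * orbitProd F ^ k) =
            𝐱 ^ (i - q) * (𝐲 ^ j * orbitProd F ^ (k + 1)) +
              𝐱 ^ (i - q + 1) * (𝐲 ^ (j + (q - 1)) * orbitProd F ^ k) := by
          have hi' : 𝐱 ^ i = 𝐱 ^ (i - q) * (orbitProd F + 𝐱 * 𝐲 ^ (q - 1)) := by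
            rw [orbitProd_eq, sub_add_cancel, ← pow_add, Nat.sub_add_cancel (by lia)]
          rw [hi']
          ring
        have hq := Fintype.one_lt_card (α := F)
        rw [hreduce]
        exact W.add_mem (ih _ (by lia) _ _) (ih _ (by lia) _ _)
  refine Submodule.eq_top_iff'.2 fun f => ?_
  induction f using MvPolynomial.induction_on' with
  | add f g hf hg => exact W.add_mem hf hg
  | monomial u a =>
    have hu : MvPolynomial.monomial u a = a • (𝐱 ^ u 0 * (𝐲 ^ u 1 * orbitProd F ^ 0)) := by
      rw [MvPolynomial.monomial_eq, Finsupp.prod_fintype _ _ fun _ => pow_zero _,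
        MvPolynomial.smul_eq_C_mul, Fin.prod_univ_two, pow_zero, mul_one]
    exact hu ▸ W.smul_mem a (hmon _ _ _)

theorem exists_invariant_sub_mem_cofixedKer_borel {f : MvPolynomial (Fin 2) F} (hf : 𝐲 ∣ f) :
    ∃ h ∈ invariants (borel F), 𝐲 ∣ h ∧ f - 𝐱 ^ (q - 1) * h ∈ cofixedKer (borel F) := by
  let I := Subalgebra.toSubmodule (invariants (borel F)) ⊓ (Ideal.span {𝐲}).restrictScalars F
  let W := cofixedKer (borel F) ⊔ I.map (LinearMap.mulLeft F (𝐱 ^ (q - 1)))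
  suffices hW : ⊤ ≤ W.comap (LinearMap.mulLeft F 𝐲) by
    obtain ⟨k, rfl⟩ := hf
    obtain ⟨n, hn, _, ⟨h, ⟨hinv, hdvd⟩, rfl⟩, hsum⟩ := Submodule.mem_sup.1 (hW (x := k) trivial)
    refine ⟨h, hinv, Ideal.mem_span_singleton.1 hdvd, ?_⟩
    rwa [← LinearMap.mulLeft_apply (R := F) 𝐲, ← hsum, LinearMap.mulLeft_apply,
      add_sub_cancel_right]
  rw [← span_monomial_orbitProd, Submodule.span_le]
  rintro _ ⟨m, l, k, hm, rfl⟩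
  have hshift : LinearMap.mulLeft F 𝐲 (𝐱 ^ m * (𝐲 ^ l * orbitProd F ^ k)) =
      𝐱 ^ m * (𝐲 ^ (l + 1) * orbitProd F ^ k) := by
    rw [LinearMap.mulLeft_apply]
    ring
  rw [SetLike.mem_coe, Submodule.mem_comap, hshift]
  by_cases hdvd : q - 1 ∣ l + 1 ∧ q - 1 ∣ m + k
  · obtain hm' | rfl := (Nat.le_sub_one_of_lt hm).lt_or_eq
    · exact Submodule.mem_sup_left
        (monomial_mem_cofixedKer_borel_of_lt hm' (Nat.le_of_dvd l.succ_pos hdvd.1) k)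
    · refine Submodule.mem_sup_right ⟨_, ⟨monomial_mem_invariants_borel hdvd.1
        ((Nat.dvd_add_right dvd_rfl).1 hdvd.2), ?_⟩, rfl⟩
      exact Ideal.mem_span_singleton.2 ((dvd_pow_self _ l.succ_ne_zero).mul_right _)
  · exact Submodule.mem_sup_left (monomial_mem_cofixedKer_borel_of_not_dvd hdvd)

end Borel

section PointSum

variable {F : Type} [Field F] [Fintype F]

local notation "q" => Fintype.card F
local notation "𝐱" => (MvPolynomial.X 0 : MvPolynomial (Fin 2) F)
local notation "𝐲" => (MvPolynomial.X 1 : MvPolynomial (Fin 2) F)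
local notation "𝐞" => (Pi.single 0 1 : Fin 2 → F)

theorem mem_NG_of_not_dvd {f : MvPolynomial (Fin 2) F} {d : ℕ} (hf : f.IsHomogeneous d)
    (hd : ¬q - 1 ∣ d) : f ∈ NG F := by
  obtain ⟨a, ha⟩ := exists_pow_ne_one hd
  rw [← cofixedKer_top]
  exact mem_cofixedKer_of_lsub_eq_smul (Subgroup.mem_top (upper a a 0)) ha
    (coe_upper_self a ▸ lsub_scalar hf (a : F))

theorem sum_lsub_lineRep_sub_mem_NG (f : MvPolynomial (Fin 2) F) :
    ∑ r : Option F, lsub (lineRep r).1 f - f ∈ NG F := by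
  have h : ∑ r : Option F, (lsub (lineRep r).1 f - f) ∈ NG F :=
    Submodule.sum_mem _ fun r _ => Submodule.subset_span ⟨_, _, rfl⟩
  rwa [Finset.sum_sub_distrib, Finset.sum_const, Finset.card_univ, Fintype.card_option, succ_nsmul,
    ← Nat.cast_smul_eq_nsmul F, FiniteField.cast_card_eq_zero, zero_smul, zero_add] at h

variable [DecidableEq F]

instance : Fintype (⊤ : Subgroup (GL (Fin 2) F)) := .ofEquiv _ Subgroup.topEquiv.symm.toEquiv

/-- The functional `f ↦ ∑ f(v)`, the sum being over the nonzero vectors `v`. -/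
def pointSum (F : Type) [Field F] [Fintype F] [DecidableEq F] : MvPolynomial (Fin 2) F →ₗ[F] F :=
  ∑ v ∈ ({0}ᶜ : Finset (Fin 2 → F)), (MvPolynomial.aeval v).toLinearMap

theorem pointSum_apply (f : MvPolynomial (Fin 2) F) :
    pointSum F f = ∑ v ∈ ({0}ᶜ : Finset (Fin 2 → F)), MvPolynomial.aeval v f := by
  simp [pointSum]

theorem pointSum_lsub (g : GL (Fin 2) F) (f : MvPolynomial (Fin 2) F) :
    pointSum F (lsub g.1 f) = pointSum F f := by
  have hg (v : Fin 2 → F) : g.1 *ᵥ v = 0 ↔ v = 0 :=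
    ⟨fun h => Matrix.mulVec_injective_of_isUnit g.isUnit (h.trans (Matrix.mulVec_zero _).symm),
      fun h => by rw [h, Matrix.mulVec_zero]⟩
  simp_rw [pointSum_apply, aeval_lsub]
  refine Finset.sum_bij (fun v _ => g.1 *ᵥ v) (fun v hv => ?_)
    (fun _ _ _ _ h => Matrix.mulVec_injective_of_isUnit g.isUnit h)
    (fun v hv => ?_) fun _ _ => rfl
  · rwa [Finset.mem_compl, Finset.mem_singleton, hg, ← Finset.mem_singleton, ← Finset.mem_compl]
  · have hinv : g.1 *ᵥ (g⁻¹.1 *ᵥ v) = v := by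
      rw [Matrix.mulVec_mulVec, ← Units.val_mul, mul_inv_cancel, Units.val_one, Matrix.one_mulVec]
    refine ⟨g⁻¹.1 *ᵥ v, ?_, hinv⟩
    rwa [Finset.mem_compl, Finset.mem_singleton, ← hg, hinv, ← Finset.mem_singleton,
      ← Finset.mem_compl]

theorem pointSum_eq_zero_of_mem_NG {f : MvPolynomial (Fin 2) F} (hf : f ∈ NG F) :
    pointSum F f = 0 := by
  suffices NG F ≤ LinearMap.ker (pointSum F) from this hf
  refine Submodule.span_le.2 ?_
  rintro _ ⟨g, f, rfl⟩
  simp [pointSum_lsub]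

theorem sum_compl_zero_eq_sum_lineRep {M : Type*} [AddCommMonoid M] (φ : (Fin 2 → F) → M) :
    ∑ v ∈ {0}ᶜ, φ v = ∑ r : Option F, ∑ c : Fˣ, φ ((c : F) • (lineRep r).1 *ᵥ 𝐞) := by
  rw [← Fintype.sum_prod_type', eq_comm]
  have hnone : (lineRep (none : Option F)).1 *ᵥ 𝐞 = 𝐞 := Matrix.one_mulVec _
  have hsome (s : F) : (lineRep (some s)).1 *ᵥ 𝐞 = ![s, 1] := by
    ext i
    fin_cases i <;> simp [lineRep]
  refine Finset.sum_bij (fun z _ => (z.2 : F) • (lineRep z.1).1 *ᵥ 𝐞) ?_ ?_ ?_ fun _ _ => rfl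
  · rintro ⟨_ | s, c⟩ -
    · simp [hnone]
    · simp [hsome]
  · rintro ⟨_ | s, c⟩ - ⟨_ | s', c'⟩ - h <;>
    · have h0 := congrFun h 0
      have h1 := congrFun h 1
      have hc := c.ne_zero
      have hc' := c'.ne_zero
      simp_all [Units.ext_iff]
  · intro v hv
    by_cases hv1 : v 1 = 0
    · have hv0 : v 0 ≠ 0 := fun hv0 => by
        simp [_root_.funext_iff, Fin.forall_fin_two, hv0, hv1] at hv
      refine ⟨(none, .mk0 _ hv0), Finset.mem_univ _, ?_⟩
      ext i
      fin_cases i <;> simp [hnone, hv1]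
    · refine ⟨(some (v 0 / v 1), .mk0 _ hv1), Finset.mem_univ _, ?_⟩
      ext i
      fin_cases i <;> simp [hsome, mul_div_cancel₀, hv1]

theorem pointSum_eq_neg_aeval_sum {f : MvPolynomial (Fin 2) F} {d : ℕ} (hf : f.IsHomogeneous d)
    (hd : q - 1 ∣ d) :
    pointSum F f = -MvPolynomial.aeval 𝐞 (∑ r : Option F, lsub (lineRep r).1 f) := by
  rw [pointSum_apply, sum_compl_zero_eq_sum_lineRep, map_sum, ← Finset.sum_neg_distrib]
  refine Finset.sum_congr rfl fun r _ => ?_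
  simp_rw [aeval_smul_of_isHomogeneous hf, pow_eq_one_of_dvd (Units.ne_zero _) hd, one_mul]
  rw [Finset.sum_const, Finset.card_univ, Fintype.card_units, ← Nat.cast_smul_eq_nsmul F,
    cast_card_sub_one, neg_one_smul, aeval_lsub]

theorem exists_sub_mem_NG_of_pointSum_eq_zero {f : MvPolynomial (Fin 2) F} {d : ℕ}
    (hf : f.IsHomogeneous d) (hsum : pointSum F f = 0) :
    ∃ h, 𝐲 ∣ h ∧ f - 𝐱 ^ (q - 1) * h ∈ NG F ∧ transfer ⊤ f = -𝐲 ^ (q - 1) * h := by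
  by_cases hd : q - 1 ∣ d
  · set f' := ∑ r : Option F, lsub (lineRep r).1 f
    have hy : 𝐲 ∣ f' := by
      refine X_dvd_of_aeval_single_eq_zero (i := 0) (d := d) ?_ zero_ne_one ?_
      · exact .sum _ _ _ fun r _ => isHomogeneous_lsub _ hf
      · rwa [← neg_eq_zero, ← pointSum_eq_neg_aeval_sum hf hd]
    obtain ⟨h, hinv, hyh, hmem⟩ := exists_invariant_sub_mem_cofixedKer_borel hy
    refine ⟨h, hyh, ?_, ?_⟩
    · have hmemG : f' - 𝐱 ^ (q - 1) * h ∈ NG F := by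
        rw [← cofixedKer_top]
        exact cofixedKer_mono le_top hmem
      rw [← sub_sub_cancel f' f, sub_right_comm]
      exact Submodule.sub_mem _ hmemG (sum_lsub_lineRep_sub_mem_NG f)
    · have htransfer := transfer_eq_zero_of_mem_cofixedKer hmem
      rw [map_sub, sub_eq_zero, transfer_mul_of_mem_invariants hinv,
        transfer_borel_X_zero_pow] at htransfer
      rw [transfer_top_eq_transfer_sum bijective_lineRep_mul, ← htransfer]
  · have hmem := mem_NG_of_not_dvd hf hd
    refine ⟨0, dvd_zero _, by simpa using hmem, ?_⟩
    rw [mul_zero, transfer_eq_zero_of_mem_cofixedKer (by rwa [cofixedKer_top])]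

theorem mem_NG_iff {f : MvPolynomial (Fin 2) F} {d : ℕ} (hf : f.IsHomogeneous d) :
    f ∈ NG F ↔ pointSum F f = 0 ∧ transfer ⊤ f = 0 := by
  refine ⟨fun h => ⟨pointSum_eq_zero_of_mem_NG h, ?_⟩, fun ⟨hsum, htransfer⟩ => ?_⟩
  · exact transfer_eq_zero_of_mem_cofixedKer (by rwa [cofixedKer_top])
  · obtain ⟨h, -, hmem, hh⟩ := exists_sub_mem_NG_of_pointSum_eq_zero hf hsum
    rw [htransfer, eq_comm, neg_mul, neg_eq_zero, mul_eq_zero,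
      or_iff_right (pow_ne_zero _ (MvPolynomial.X_ne_zero _))] at hh
    rwa [hh, mul_zero, sub_zero] at hmem

end PointSum

section Dickson

variable {F : Type} [Field F]

local notation "𝐱" => (MvPolynomial.X 0 : MvPolynomial (Fin 2) F)
local notation "𝐲" => (MvPolynomial.X 1 : MvPolynomial (Fin 2) F)
local notation "𝐞" => (Pi.single 0 1 : Fin 2 → F)

/-- The group of unipotent upper triangular matrices. -/
def unipotent (F : Type) [Field F] : Subgroup (GL (Fin 2) F) where
  carrier := {g | g 1 0 = 0 ∧ g 0 0 = 1 ∧ g 1 1 = 1}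
  mul_mem' {g h} hg hh := by simp_all [Matrix.mul_apply, Fin.sum_univ_two]
  one_mem' := by simp
  inv_mem' {g} hg := by simp_all [Matrix.inv_def, Matrix.adjugate_fin_two, Matrix.det_fin_two]

theorem unipotent_le_borel : unipotent F ≤ borel F := fun _ hg => hg.1

theorem upper_mem_unipotent (c : F) : upper 1 1 c ∈ unipotent F := by
  simp [unipotent, coe_upper]

theorem X_one_mem_invariants_unipotent : 𝐲 ∈ invariants (unipotent F) :=
  mem_invariants.2 fun g hg => by
    rw [lsub_borel_X_one (unipotent_le_borel hg), hg.2.2, one_smul]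

variable [Fintype F]

local notation "q" => Fintype.card F

theorem orbitProd_mem_invariants_unipotent : orbitProd F ∈ invariants (unipotent F) :=
  mem_invariants.2 fun g hg => by
    rw [lsub_borel_orbitProd (unipotent_le_borel hg), hg.2.1, one_smul]

theorem orbitProd_dvd {f : MvPolynomial (Fin 2) F} (hf : f ∈ invariants (unipotent F))
    (hx : 𝐱 ∣ f) : orbitProd F ∣ f := by
  refine Fintype.prod_dvd_of_isRelPrime
    (fun a b hab => isRelPrime_lineForm (Option.some_injective F |>.ne hab)) fun a => ?_
  have h := map_dvd (lsub (upper 1 1 (-a)).1) hx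
  rw [mem_invariants.1 hf _ (upper_mem_unipotent _), lsub_X_zero, coe_upper] at h
  simpa [lineForm, sub_eq_add_neg] using h

theorem card_dvd_of_mem_invariants_unipotent {e : ℕ} {f : MvPolynomial (Fin 2) F}
    (hhom : f.IsHomogeneous e) (hf : f ∈ invariants (unipotent F))
    (h0 : MvPolynomial.aeval 𝐞 f ≠ 0) : q ∣ e := by
  induction e using Nat.strong_induction_on generalizing f with
  | _ e ih =>
    rcases Nat.eq_zero_or_pos e with rfl | he
    · exact dvd_zero _
    set c := MvPolynomial.aeval (Pi.single 1 1 : Fin 2 → F) f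
    have hinv : f - c • 𝐲 ^ e ∈ invariants (unipotent F) :=
      sub_mem hf (Subalgebra.smul_mem _ (pow_mem X_one_mem_invariants_unipotent e) c)
    have hhom' : (f - c • 𝐲 ^ e).IsHomogeneous e :=
      hhom.sub ((MvPolynomial.homogeneousSubmodule (Fin 2) F e).smul_mem c
        (MvPolynomial.isHomogeneous_X_pow 1 e))
    have heval : MvPolynomial.aeval 𝐞 (f - c • 𝐲 ^ e) ≠ 0 := by simpa [he.ne'] using h0
    obtain ⟨k, hk⟩ := orbitProd_dvd hinv (X_dvd_sub_aeval_single_smul hhom one_ne_zero)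
    rw [hk] at hinv hhom' heval
    rw [map_mul, aeval_single_orbitProd, one_mul] at heval
    have hk0 : k ≠ 0 := by
      rintro rfl
      exact heval (map_zero _)
    obtain ⟨hle, hkhom⟩ :=
      isHomogeneous_of_mul isHomogeneous_orbitProd orbitProd_ne_zero hhom' hk0
    have hkinv :=
      mem_invariants_of_mul_mem orbitProd_mem_invariants_unipotent orbitProd_ne_zero hinv
    have hlt : e - q < e := Nat.sub_lt he Fintype.card_pos
    exact (Nat.dvd_sub_iff_left hle dvd_rfl).1 (ih _ hlt hkhom hkinv heval)

theorem card_sub_one_dvd_of_mem_invariants_borel {e : ℕ} {f : MvPolynomial (Fin 2) F}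
    (hhom : f.IsHomogeneous e) (hf : f ∈ invariants (borel F)) (hf0 : f ≠ 0) : q - 1 ∣ e := by
  by_contra hdvd
  obtain ⟨a, ha⟩ := exists_pow_ne_one hdvd
  have h := lsub_scalar hhom (a : F)
  rw [← coe_upper_self, mem_invariants.1 hf _ (upper_mem_borel a a 0)] at h
  exact ha (smul_left_injective F hf0 (by simpa using h.symm))

theorem dvd_of_mem_invariants_top {e : ℕ} {f : MvPolynomial (Fin 2) F} (hhom : f.IsHomogeneous e)
    (hf : f ∈ invariants ⊤) (h0 : MvPolynomial.aeval 𝐞 f ≠ 0) : q ^ 2 - q ∣ e := by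
  have hcop : Nat.Coprime q (q - 1) := (Nat.coprime_self_sub_right Fintype.card_pos).2 (by simp)
  rw [pow_two, ← Nat.mul_sub_one]
  refine hcop.mul_dvd_of_dvd_of_dvd
    (card_dvd_of_mem_invariants_unipotent hhom (invariants_anti le_top hf) h0)
    (card_sub_one_dvd_of_mem_invariants_borel hhom (invariants_anti le_top hf) ?_)
  rintro rfl
  exact h0 (map_zero _)

/-- The determinant `x ^ (q ^ n) * y - x * y ^ (q ^ n)`, on which `GL₂` acts by `det`. -/
def mooreDet (F : Type) [Field F] [Fintype F] (n : ℕ) : MvPolynomial (Fin 2) F :=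
  MvPolynomial.X 0 ^ Fintype.card F ^ n * MvPolynomial.X 1 -
    MvPolynomial.X 0 * MvPolynomial.X 1 ^ Fintype.card F ^ n

theorem lsub_mooreDet (g : Matrix (Fin 2) (Fin 2) F) (n : ℕ) :
    lsub g (mooreDet F n) = g.det • mooreDet F n := by
  rw [mooreDet, map_sub, map_mul, map_mul, map_pow, map_pow, lsub_X_zero, lsub_X_one,
    smul_add_smul_pow_card_pow, smul_add_smul_pow_card_pow, Matrix.det_fin_two]
  simp only [Algebra.smul_def, map_sub, map_mul]
  ring

theorem aeval_mooreDet (v : Fin 2 → F) (n : ℕ) : MvPolynomial.aeval v (mooreDet F n) = 0 := by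
  simp [mooreDet, FiniteField.pow_card_pow]

theorem mooreDet_one : mooreDet F 1 = 𝐲 * orbitProd F := by
  have hy : 𝐲 ^ q = 𝐲 * 𝐲 ^ (q - 1) := by rw [← pow_succ', Nat.sub_add_cancel Fintype.card_pos]
  rw [mooreDet, orbitProd_eq, pow_one, hy]
  ring

theorem mooreDet_one_ne_zero : mooreDet F 1 ≠ 0 := by
  rw [mooreDet_one]
  exact mul_ne_zero (MvPolynomial.X_ne_zero _) orbitProd_ne_zero

theorem isHomogeneous_mooreDet_one : (mooreDet F 1).IsHomogeneous (q + 1) := by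
  rw [mooreDet_one, add_comm]
  exact (MvPolynomial.isHomogeneous_X _ _).mul isHomogeneous_orbitProd

theorem mooreDet_one_pow_dvd {f : MvPolynomial (Fin 2) F} (hf : f ∈ invariants ⊤) {n : ℕ}
    (hy : 𝐲 ^ n ∣ f) : mooreDet F 1 ^ n ∣ f := by
  rw [mooreDet_one, ← prod_lineForm, ← Finset.prod_pow]
  refine Fintype.prod_dvd_of_isRelPrime (fun r s hrs => (isRelPrime_lineForm hrs).pow) fun r => ?_
  have h := map_dvd (lsub (lineRep r)⁻¹.1) hy
  rwa [mem_invariants.1 hf _ (Subgroup.mem_top _), map_pow, lsub_lineRep_inv] at h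

theorem card_sub_one_dvd_exponent {f : MvPolynomial (Fin 2) F} (hf : f ∈ invariants (borel F))
    {u : Fin 2 →₀ ℕ} (hu : f.coeff u ≠ 0) : q - 1 ∣ u 1 := by
  by_contra hdvd
  obtain ⟨a, ha⟩ := exists_pow_ne_one hdvd
  have hdiag : (upper 1 a 0).1 = Matrix.diagonal ![1, (a : F)] := by
    ext i j
    fin_cases i <;> fin_cases j <;> simp [coe_upper]
  have h := coeff_lsub_diagonal ![1, (a : F)] f u
  rw [← hdiag, mem_invariants.1 hf _ (upper_mem_borel _ _ _)] at h
  exact ha (mul_right_cancel₀ hu (by simpa using h.symm))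

/-- The Dickson invariant of degree `q ^ 2 - 1`. -/
def dicksonZero (F : Type) [Field F] [Fintype F] : MvPolynomial (Fin 2) F :=
  mooreDet F 1 ^ (Fintype.card F - 1)

theorem dicksonZero_ne_zero : dicksonZero F ≠ 0 := pow_ne_zero _ mooreDet_one_ne_zero

theorem isHomogeneous_dicksonZero : (dicksonZero F).IsHomogeneous (q ^ 2 - 1) := by
  rw [← one_pow 2, Nat.sq_sub_sq]
  exact isHomogeneous_mooreDet_one.pow _

theorem aeval_dicksonZero (v : Fin 2 → F) : MvPolynomial.aeval v (dicksonZero F) = 0 := by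
  rw [dicksonZero, map_pow, aeval_mooreDet,
    zero_pow (Nat.sub_pos_of_lt Fintype.one_lt_card).ne']

theorem dicksonZero_mem_invariants : dicksonZero F ∈ invariants ⊤ :=
  mem_invariants.2 fun g _ => by
    rw [dicksonZero, map_pow, lsub_mooreDet, smul_pow,
      pow_eq_one_of_dvd (Matrix.GeneralLinearGroup.det_ne_zero g) dvd_rfl, one_smul]

theorem dicksonZero_pow_succ_dvd {f : MvPolynomial (Fin 2) F} (hf : f ∈ invariants ⊤) {n : ℕ}
    (hy : 𝐲 ^ ((q - 1) * n + 1) ∣ f) : dicksonZero F ^ (n + 1) ∣ f := by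
  -- The exponents of `y` in `f` are multiples of `q - 1`, so the bound on them can be rounded up.
  rw [dicksonZero, ← pow_mul]
  refine mooreDet_one_pow_dvd hf (X_pow_dvd_iff.2 fun u hu => ?_)
  have hle := X_pow_dvd_iff.1 hy u hu
  obtain ⟨t, ht⟩ := card_sub_one_dvd_exponent (invariants_anti le_top hf) hu
  rw [ht] at hle ⊢
  exact Nat.mul_le_mul_left _ (Nat.lt_of_mul_lt_mul_left (Nat.lt_of_succ_le hle))

/-- The Dickson invariant of degree `q ^ 2 - q`, that is `mooreDet F 2 / mooreDet F 1`. -/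
def dicksonOne (F : Type) [Field F] [Fintype F] : MvPolynomial (Fin 2) F :=
  ∑ i ∈ Finset.range (Fintype.card F + 1), (MvPolynomial.X 0 ^ (Fintype.card F - 1)) ^ i *
    (MvPolynomial.X 1 ^ (Fintype.card F - 1)) ^ (Fintype.card F - i)

theorem mooreDet_one_mul_dicksonOne : mooreDet F 1 * dicksonOne F = mooreDet F 2 := by
  have hgeom := geom_sum₂_mul (𝐱 ^ (q - 1)) (𝐲 ^ (q - 1)) (q + 1)
  simp only [Nat.add_sub_cancel] at hgeom
  have hq (z : MvPolynomial (Fin 2) F) : z ^ q = z * z ^ (q - 1) := by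
    rw [← pow_succ', Nat.sub_add_cancel Fintype.card_pos]
  have hq2 (z : MvPolynomial (Fin 2) F) : z ^ q ^ 2 = z * (z ^ (q - 1)) ^ (q + 1) := by
    rw [← pow_mul, ← pow_succ', mul_comm, ← Nat.sq_sub_sq, one_pow,
      Nat.sub_add_cancel (Nat.one_le_pow _ _ Fintype.card_pos)]
  rw [mooreDet, mooreDet, pow_one, hq 𝐱, hq 𝐲, hq2 𝐱, hq2 𝐲, dicksonOne]
  linear_combination (𝐱 * 𝐲) * hgeom

theorem isHomogeneous_dicksonOne : (dicksonOne F).IsHomogeneous (q ^ 2 - q) := by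
  refine .sum _ _ _ fun i hi => ?_
  have h := ((MvPolynomial.isHomogeneous_X_pow (R := F) (0 : Fin 2) (q - 1)).pow i).mul
    ((MvPolynomial.isHomogeneous_X_pow (R := F) (1 : Fin 2) (q - 1)).pow (q - i))
  rwa [← mul_add, Nat.add_sub_cancel' (Finset.mem_range_succ_iff.1 hi), Nat.sub_mul, one_mul,
    ← pow_two] at h

theorem aeval_single_dicksonOne : MvPolynomial.aeval 𝐞 (dicksonOne F) = 1 := by
  have hq := Nat.sub_ne_zero_of_lt (Fintype.one_lt_card (α := F))
  rw [dicksonOne, map_sum, Finset.sum_range_succ, Finset.sum_eq_zero]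
  · simp
  · intro i hi
    simp [hq, Nat.sub_ne_zero_of_lt (Finset.mem_range.1 hi)]

theorem dicksonOne_mem_invariants : dicksonOne F ∈ invariants ⊤ := by
  refine mem_invariants.2 fun g _ => mul_left_cancel₀ (a := lsub g.1 (mooreDet F 1)) ?_ ?_
  · rw [lsub_mooreDet]
    exact smul_ne_zero (Matrix.GeneralLinearGroup.det_ne_zero g) mooreDet_one_ne_zero
  · rw [← map_mul, mooreDet_one_mul_dicksonOne, lsub_mooreDet, lsub_mooreDet, smul_mul_assoc,
      mooreDet_one_mul_dicksonOne]

theorem transfer_top_X_zero_pow_mul_orbitProd_pow [DecidableEq F] :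
    transfer ⊤ (𝐱 ^ (q - 1) * orbitProd F ^ (q - 1)) = -dicksonZero F := by
  have hinv : orbitProd F ^ (q - 1) ∈ invariants (borel F) := by
    simpa using monomial_mem_invariants_borel (F := F) (dvd_zero (q - 1)) (dvd_refl (q - 1))
  have hborel : transfer (borel F) (𝐱 ^ (q - 1) * orbitProd F ^ (q - 1)) = -dicksonZero F := by
    rw [transfer_mul_of_mem_invariants hinv, transfer_borel_X_zero_pow, dicksonZero, mooreDet_one,
      mul_pow, neg_mul]
  rw [transfer_top_eq_sum_lsub_inv bijective_lineRep_mul, hborel]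
  simp only [map_neg, mem_invariants.1 dicksonZero_mem_invariants _ (Subgroup.mem_top _)]
  rw [Finset.sum_const, Finset.card_univ, Fintype.card_option, succ_nsmul,
    ← Nat.cast_smul_eq_nsmul F, FiniteField.cast_card_eq_zero, zero_smul, zero_add]

end Dickson

section RankNullity

variable {K V W : Type*} [Field K] [AddCommGroup V] [Module K V] [AddCommGroup W] [Module K W]

theorem finrank_map_add_finrank_inf_ker (U : Submodule K V) [FiniteDimensional K U]
    (φ : V →ₗ[K] W) :
    Module.finrank K (U.map φ) + Module.finrank K (U ⊓ LinearMap.ker φ : Submodule K V) =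
      Module.finrank K U := by
  rw [← LinearMap.finrank_range_add_finrank_ker (φ.domRestrict U), LinearMap.range_domRestrict,
    LinearMap.ker_domRestrict, ← Submodule.map_comap_subtype, Submodule.finrank_map_subtype_eq]

theorem finrank_quotient_comap_subtype_add (U N : Submodule K V) [FiniteDimensional K U] :
    Module.finrank K (U ⧸ N.comap U.subtype) + Module.finrank K (U ⊓ N : Submodule K V) =
      Module.finrank K U := by
  rw [← Submodule.finrank_quotient_add_finrank (N.comap U.subtype), ← Submodule.map_comap_subtype,
    Submodule.finrank_map_subtype_eq]

theorem finrank_map_functional (U : Submodule K V) (φ : V →ₗ[K] K) {p : Prop} [Decidable p]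
    (hp : p ↔ ∃ f ∈ U, φ f ≠ 0) : Module.finrank K (U.map φ) = if p then 1 else 0 := by
  split_ifs with h
  · obtain ⟨f, hf, hφ⟩ := hp.1 h
    rw [← LinearMap.range_domRestrict, LinearMap.range_eq_top.2, finrank_top, Module.finrank_self]
    exact LinearMap.surjective fun h0 => hφ (LinearMap.congr_fun h0 ⟨f, hf⟩)
  · have hbot : U.map φ = ⊥ := by
      rw [Submodule.eq_bot_iff]
      rintro _ ⟨f, hf, rfl⟩
      exact by_contra fun hφ => h (hp.2 ⟨f, hf, hφ⟩)
    rw [hbot, finrank_bot]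

end RankNullity

section HomogeneousInvariants

variable {n : ℕ} {F : Type} [Field F]

/-- The space of `H`-invariant polynomials that are homogeneous of degree `e`. -/
def homogeneousInvariants (H : Subgroup (GL (Fin n) F)) (e : ℕ) :
    Submodule F (MvPolynomial (Fin n) F) :=
  MvPolynomial.homogeneousSubmodule (Fin n) F e ⊓ Subalgebra.toSubmodule (invariants H)

instance (e : ℕ) : FiniteDimensional F (MvPolynomial.homogeneousSubmodule (Fin n) F e) :=
  Module.Finite.iff_fg.2 (MvPolynomial.homogeneousSubmodule_fg _ F e)

variable {H : Subgroup (GL (Fin n) F)}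

instance (e : ℕ) : FiniteDimensional F (homogeneousInvariants H e) :=
  Submodule.finiteDimensional_inf_left _ _

theorem finrank_homogeneousInvariants_inf_span {L : MvPolynomial (Fin n) F} {a : ℕ}
    (hL : L ∈ homogeneousInvariants H a) (hL0 : L ≠ 0) (e : ℕ) :
    Module.finrank F (homogeneousInvariants H e ⊓ (Ideal.span {L}).restrictScalars F :
        Submodule F (MvPolynomial (Fin n) F)) =
      if a ≤ e then Module.finrank F (homogeneousInvariants H (e - a)) else 0 := by
  have hfactor {k : MvPolynomial (Fin n) F} (hk : L * k ∈ homogeneousInvariants H e)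
      (hk0 : k ≠ 0) : a ≤ e ∧ k ∈ homogeneousInvariants H (e - a) := by
    obtain ⟨hle, hhom⟩ := isHomogeneous_of_mul hL.1 hL0 hk.1 hk0
    exact ⟨hle, hhom, mem_invariants_of_mul_mem hL.2 hL0 hk.2⟩
  split_ifs with hle
  · have hmap : homogeneousInvariants H e ⊓ (Ideal.span {L}).restrictScalars F =
        (homogeneousInvariants H (e - a)).map (LinearMap.mulLeft F L) := by
      apply le_antisymm
      · rintro f ⟨hf, hdvd⟩
        obtain ⟨k, rfl⟩ := Ideal.mem_span_singleton.1 hdvd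
        rcases eq_or_ne k 0 with rfl | hk0
        · rw [mul_zero]
          exact zero_mem _
        · exact ⟨k, (hfactor hf hk0).2, rfl⟩
      · rintro _ ⟨k, hk, rfl⟩
        refine ⟨⟨?_, (invariants H).mul_mem hL.2 hk.2⟩,
          Ideal.mem_span_singleton.2 (dvd_mul_right _ _)⟩
        exact Nat.add_sub_cancel' hle ▸ MvPolynomial.IsHomogeneous.mul hL.1 hk.1
    have hinj : Function.Injective (LinearMap.mulLeft F L) := fun _ _ => mul_left_cancel₀ hL0
    rw [hmap]
    exact (Submodule.equivMapOfInjective _ hinj _).finrank_eq.symm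
  · have hbot : homogeneousInvariants H e ⊓ (Ideal.span {L}).restrictScalars F = ⊥ := by
      rw [Submodule.eq_bot_iff]
      rintro f ⟨hf, hdvd⟩
      obtain ⟨k, rfl⟩ := Ideal.mem_span_singleton.1 hdvd
      by_contra h0
      exact hle (hfactor hf (right_ne_zero_of_mul h0)).1
    rw [hbot, finrank_bot]

end HomogeneousInvariants

section Dimensions

variable {F : Type} [Field F] [Fintype F]

local notation "q" => Fintype.card F
local notation "𝐱" => (MvPolynomial.X 0 : MvPolynomial (Fin 2) F)
local notation "𝐲" => (MvPolynomial.X 1 : MvPolynomial (Fin 2) F)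
local notation "𝐞" => (Pi.single 0 1 : Fin 2 → F)

theorem dicksonZero_pow_mem_homogeneousInvariants (n : ℕ) :
    dicksonZero F ^ n ∈ homogeneousInvariants ⊤ (n * (q ^ 2 - 1)) :=
  ⟨mul_comm n (q ^ 2 - 1) ▸ isHomogeneous_dicksonZero.pow n,
    pow_mem dicksonZero_mem_invariants n⟩

theorem exists_mem_homogeneousInvariants_aeval_single_ne_zero_iff {e : ℕ} :
    (∃ f ∈ homogeneousInvariants (⊤ : Subgroup (GL (Fin 2) F)) e,
      MvPolynomial.aeval 𝐞 f ≠ 0) ↔ q ^ 2 - q ∣ e := by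
  refine ⟨fun ⟨f, hf, h0⟩ => dvd_of_mem_invariants_top hf.1 hf.2 h0, ?_⟩
  rintro ⟨k, rfl⟩
  refine ⟨dicksonOne F ^ k, ⟨isHomogeneous_dicksonOne.pow k, pow_mem dicksonOne_mem_invariants k⟩,
    ?_⟩
  rw [map_pow, aeval_single_dicksonOne, one_pow]
  exact one_ne_zero

theorem homogeneousInvariants_inf_ker_aeval_single (e : ℕ) :
    homogeneousInvariants ⊤ e ⊓ LinearMap.ker (MvPolynomial.aeval (R := F) 𝐞).toLinearMap =
      homogeneousInvariants ⊤ e ⊓ (Ideal.span {dicksonZero F}).restrictScalars F := by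
  ext f
  refine and_congr_right fun hf => ⟨fun h0 => ?_, fun hdvd => ?_⟩
  · have hy : 𝐲 ∣ f := X_dvd_of_aeval_single_eq_zero hf.1 zero_ne_one h0
    have hdvd := dicksonZero_pow_succ_dvd hf.2 (n := 0) (by rwa [mul_zero, zero_add, pow_one])
    rw [zero_add, pow_one] at hdvd
    exact Ideal.mem_span_singleton.2 hdvd
  · obtain ⟨k, rfl⟩ := Ideal.mem_span_singleton.1 hdvd
    rw [SetLike.mem_coe, LinearMap.mem_ker, AlgHom.toLinearMap_apply, map_mul, aeval_dicksonZero,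
      zero_mul]

theorem finrank_homogeneousInvariants_top (e : ℕ) :
    Module.finrank F (homogeneousInvariants (⊤ : Subgroup (GL (Fin 2) F)) e) =
      (if q ^ 2 - q ∣ e then 1 else 0) + if q ^ 2 - 1 ≤ e then
        Module.finrank F (homogeneousInvariants (⊤ : Subgroup (GL (Fin 2) F)) (e - (q ^ 2 - 1)))
      else 0 := by
  have hmem : dicksonZero F ∈ homogeneousInvariants ⊤ (q ^ 2 - 1) := by
    simpa using dicksonZero_pow_mem_homogeneousInvariants (F := F) 1
  rw [← finrank_map_add_finrank_inf_ker _ (MvPolynomial.aeval (R := F) 𝐞).toLinearMap,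
    homogeneousInvariants_inf_ker_aeval_single,
    finrank_homogeneousInvariants_inf_span hmem dicksonZero_ne_zero]
  congr 1
  exact finrank_map_functional _ _ exists_mem_homogeneousInvariants_aeval_single_ne_zero_iff.symm

theorem pointSum_monomial [DecidableEq F] {u : Fin 2 →₀ ℕ} (hu : u ≠ 0) (a : F) :
    pointSum F (MvPolynomial.monomial u a) = a * ∏ i, ∑ c : F, c ^ u i := by
  have hzero : MvPolynomial.aeval (0 : Fin 2 → F) (MvPolynomial.monomial u a) = 0 := by
    rw [MvPolynomial.aeval_zero, MvPolynomial.constantCoeff_monomial, if_neg hu, map_zero]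
  have hsum := Fintype.sum_eq_add_sum_compl (0 : Fin 2 → F)
    fun v => MvPolynomial.aeval v (MvPolynomial.monomial u a)
  rw [hzero, zero_add] at hsum
  rw [pointSum_apply, ← hsum, Finset.prod_univ_sum, Fintype.piFinset_univ, Finset.mul_sum]
  refine Finset.sum_congr rfl fun v _ => ?_
  rw [MvPolynomial.aeval_monomial, Finsupp.prod_fintype _ _ fun _ => pow_zero _,
    Algebra.algebraMap_self_apply]

theorem pointSum_one [DecidableEq F] : pointSum F 1 = -1 := by
  have hone : 1 ≤ q ^ 2 := Nat.one_le_pow _ _ Fintype.card_pos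
  simp [pointSum_apply, Finset.card_compl, Nat.cast_sub hone]

theorem exists_isHomogeneous_pointSum_ne_zero_iff [DecidableEq F] {d : ℕ} :
    (d = 0 ∨ 2 * (q - 1) ≤ d ∧ q - 1 ∣ d) ↔
      ∃ f ∈ MvPolynomial.homogeneousSubmodule (Fin 2) F d, pointSum F f ≠ 0 := by
  have hq := Nat.sub_pos_of_lt (Fintype.one_lt_card (α := F))
  constructor
  · rintro (rfl | ⟨hle, hdvd⟩)
    · exact ⟨1, MvPolynomial.isHomogeneous_one _ _, by simp [pointSum_one]⟩
    · set u : Fin 2 →₀ ℕ := Finsupp.equivFunOnFinite.symm ![q - 1, d - (q - 1)] with hu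
      have hu0 : u ≠ 0 := fun h => hq.ne' (by simpa [hu] using DFunLike.congr_fun h 0)
      refine ⟨MvPolynomial.monomial u 1, MvPolynomial.isHomogeneous_monomial _ ?_, ?_⟩
      · rw [Finsupp.degree_eq_sum, Fin.sum_univ_two]
        exact Nat.add_sub_cancel' (show q - 1 ≤ d by lia)
      · rw [pointSum_monomial hu0, Fin.prod_univ_two, sum_pow_eq_ite, sum_pow_eq_ite,
          if_pos ⟨hq, dvd_rfl⟩, if_pos ⟨show 0 < d - (q - 1) by lia, Nat.dvd_sub hdvd dvd_rfl⟩]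
        simp
  · rintro ⟨f, hf, h0⟩
    rw [← MvPolynomial.support_sum_monomial_coeff f, map_sum] at h0
    obtain ⟨u, hu, hsum⟩ := Finset.exists_ne_zero_of_sum_ne_zero h0
    have hd := sum_eq_of_isHomogeneous hf (MvPolynomial.mem_support_iff.1 hu)
    rw [Fin.sum_univ_two] at hd
    rcases eq_or_ne u 0 with rfl | hu0
    · exact .inl hd.symm
    · rw [pointSum_monomial hu0, Fin.prod_univ_two, sum_pow_eq_ite, sum_pow_eq_ite] at hsum
      have h1 := (ite_ne_right_iff.1 (left_ne_zero_of_mul (right_ne_zero_of_mul hsum))).1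
      have h2 := (ite_ne_right_iff.1 (right_ne_zero_of_mul (right_ne_zero_of_mul hsum))).1
      have := Nat.le_of_dvd h1.1 h1.2
      have := Nat.le_of_dvd h2.1 h2.2
      exact .inr ⟨by lia, hd ▸ Nat.dvd_add h1.2 h2.2⟩

theorem map_transfer_ker_pointSum [DecidableEq F] (d : ℕ) :
    (MvPolynomial.homogeneousSubmodule (Fin 2) F d ⊓ LinearMap.ker (pointSum F)).map
        (transfer ⊤) =
      homogeneousInvariants ⊤ d ⊓ (Ideal.span {dicksonZero F ^ 2}).restrictScalars F := by
  apply le_antisymm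
  · rintro _ ⟨f, ⟨hhom, hsum⟩, rfl⟩
    obtain ⟨_, ⟨k, rfl⟩, -, hk⟩ := exists_sub_mem_NG_of_pointSum_eq_zero hhom hsum
    refine ⟨⟨isHomogeneous_transfer hhom, transfer_mem_invariants f⟩,
      Ideal.mem_span_singleton.2 (dicksonZero_pow_succ_dvd (transfer_mem_invariants f) ?_)⟩
    rw [hk, mul_one, pow_succ]
    exact ⟨-k, by ring⟩
  · rintro _ ⟨⟨hhom, hinv⟩, hdvd⟩
    obtain ⟨k, rfl⟩ := Ideal.mem_span_singleton.1 hdvd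
    rcases eq_or_ne (dicksonZero F * k) 0 with hk0 | hk0
    · rw [pow_two, mul_assoc, hk0, mul_zero]
      exact zero_mem _
    rw [pow_two, mul_assoc] at hhom hinv ⊢
    have hkinv := mem_invariants_of_mul_mem dicksonZero_mem_invariants dicksonZero_ne_zero hinv
    obtain ⟨hle, hkhom⟩ :=
      isHomogeneous_of_mul isHomogeneous_dicksonZero dicksonZero_ne_zero hhom hk0
    refine ⟨𝐱 ^ (q - 1) * orbitProd F ^ (q - 1) * -(dicksonZero F * k), ⟨?_, ?_⟩, ?_⟩
    · have hdeg : 1 * (q - 1) + q * (q - 1) + (d - (q ^ 2 - 1)) = d := by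
        rw [← add_mul, add_comm 1, ← Nat.sq_sub_sq, one_pow, Nat.add_sub_cancel' hle]
      rw [SetLike.mem_coe, MvPolynomial.mem_homogeneousSubmodule, ← hdeg]
      exact (((MvPolynomial.isHomogeneous_X _ _).pow _).mul (isHomogeneous_orbitProd.pow _)).mul
        hkhom.neg
    · rw [SetLike.mem_coe, LinearMap.mem_ker, pointSum_apply]
      simp only [map_mul, map_neg, aeval_dicksonZero, zero_mul, neg_zero, mul_zero,
        Finset.sum_const_zero]
    · rw [transfer_mul_of_mem_invariants (neg_mem hkinv),
        transfer_top_X_zero_pow_mul_orbitProd_pow, neg_mul_neg]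

theorem finrank_quotient_NG (d : ℕ) :
    Module.finrank F (MvPolynomial.homogeneousSubmodule (Fin 2) F d ⧸
        (NG F).comap (MvPolynomial.homogeneousSubmodule (Fin 2) F d).subtype) =
      (if d = 0 ∨ 2 * (q - 1) ≤ d ∧ q - 1 ∣ d then 1 else 0) + if 2 * (q ^ 2 - 1) ≤ d then
        Module.finrank F (homogeneousInvariants (⊤ : Subgroup (GL (Fin 2) F))
          (d - 2 * (q ^ 2 - 1)))
      else 0 := by
  classical
  set S := MvPolynomial.homogeneousSubmodule (Fin 2) F d
  have hNG : S ⊓ NG F = S ⊓ LinearMap.ker (pointSum F) ⊓ LinearMap.ker (transfer ⊤) := by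
    ext f
    rw [inf_assoc]
    exact and_congr_right fun hf => mem_NG_iff hf
  have hquot := finrank_quotient_comap_subtype_add S (NG F)
  have hpoint := finrank_map_add_finrank_inf_ker S (pointSum F)
  have htransfer := finrank_map_add_finrank_inf_ker (S ⊓ LinearMap.ker (pointSum F)) (transfer ⊤)
  rw [← hNG, map_transfer_ker_pointSum,
    finrank_homogeneousInvariants_inf_span (dicksonZero_pow_mem_homogeneousInvariants 2)
      (pow_ne_zero 2 dicksonZero_ne_zero)] at htransfer
  rw [finrank_map_functional S _ exists_isHomogeneous_pointSum_ne_zero_iff] at hpoint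
  lia

end Dimensions

section GeneratingFunctions

variable {K : Type*} [Field K] {n : ℕ}

theorem mk_eq_mk_mul_inv_one_sub_X_pow (hn : n ≠ 0) {a c : ℕ → K}
    (ha : ∀ e, a e = c e + if n ≤ e then a (e - n) else 0) :
    PowerSeries.mk a = PowerSeries.mk c * (1 - (PowerSeries.X : PowerSeries K) ^ n)⁻¹ := by
  rw [PowerSeries.eq_mul_inv_iff_mul_eq (by simp [hn])]
  ext e
  rw [mul_sub, mul_one, map_sub, PowerSeries.coeff_mul_X_pow', PowerSeries.coeff_mk,
    PowerSeries.coeff_mk, PowerSeries.coeff_mk, ha e, add_sub_cancel_right]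

theorem inv_one_sub_X_pow (hn : n ≠ 0) :
    (1 - (PowerSeries.X : PowerSeries K) ^ n)⁻¹ =
      PowerSeries.mk fun e => if n ∣ e then (1 : K) else 0 := by
  have hone : PowerSeries.mk (fun e => if e = 0 then (1 : K) else 0) = 1 := by
    ext e
    rw [PowerSeries.coeff_mk, PowerSeries.coeff_one]
  have hrec (e : ℕ) : (if n ∣ e then (1 : K) else 0) =
      (if e = 0 then 1 else 0) + if n ≤ e then if n ∣ e - n then 1 else 0 else 0 := by
    rcases Nat.lt_or_ge e n with he | he
    · rw [if_neg he.not_ge, add_zero]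
      exact if_congr ⟨fun h => Nat.eq_zero_of_dvd_of_lt h he, by rintro rfl; exact dvd_zero n⟩
        rfl rfl
    · rw [if_pos he, if_neg (show e ≠ 0 by lia), zero_add]
      exact if_congr (Nat.dvd_sub_iff_left he dvd_rfl).symm rfl rfl
  rw [mk_eq_mk_mul_inv_one_sub_X_pow hn hrec, hone, one_mul]

theorem X_pow_mul_inv_one_sub_X_pow (hn : n ≠ 0) (k : ℕ) :
    (PowerSeries.X : PowerSeries K) ^ (k * n) * (1 - (PowerSeries.X : PowerSeries K) ^ n)⁻¹ =
      PowerSeries.mk fun d => if k * n ≤ d ∧ n ∣ d then (1 : K) else 0 := by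
  ext d
  rw [inv_one_sub_X_pow hn, PowerSeries.coeff_X_pow_mul', PowerSeries.coeff_mk,
    PowerSeries.coeff_mk, ite_and]
  exact ite_congr rfl
    (fun h => if_congr (Nat.dvd_sub_iff_left h (dvd_mul_left _ _)) rfl rfl) fun _ => rfl

theorem mk_finrank_homogeneousInvariants_top (F : Type) [Field F] [Fintype F] :
    PowerSeries.mk (fun e =>
        (Module.finrank F (homogeneousInvariants (⊤ : Subgroup (GL (Fin 2) F)) e) : K)) =
      (1 - (PowerSeries.X : PowerSeries K) ^ (Fintype.card F ^ 2 - 1))⁻¹ *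
        (1 - (PowerSeries.X : PowerSeries K) ^ (Fintype.card F ^ 2 - Fintype.card F))⁻¹ := by
  have hq := Fintype.one_lt_card (α := F)
  have hsq : Fintype.card F < Fintype.card F ^ 2 := lt_self_pow₀ hq one_lt_two
  rw [mul_comm, inv_one_sub_X_pow (show Fintype.card F ^ 2 - Fintype.card F ≠ 0 by lia)]
  refine mk_eq_mk_mul_inv_one_sub_X_pow (by lia) fun e => ?_
  rw [finrank_homogeneousInvariants_top]
  push_cast
  rfl

end GeneratingFunctions

end

end GLCofixed

/-- Theorem: the `GL_2(F_q)`-cofixed space `S_G` of `S = F_q[x,y]` has Hilbert series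
`1 + t^{2(q−1)}/(1−t^{q−1}) + t^{2(q²−1)}/((1−t^{q²−1})(1−t^{q²−q}))`. -/
theorem statement18 (q : ℕ) (hq : IsPrimePow q) (Fq : Type) [Field Fq] [Fintype Fq]
    (hcard : Fintype.card Fq = q) :
    hilbQuot Fq (NG Fq)
      = 1 +
        (PowerSeries.X : PowerSeries ℚ) ^ (2 * (q - 1)) *
          (1 - (PowerSeries.X : PowerSeries ℚ) ^ (q - 1))⁻¹ +
        (PowerSeries.X : PowerSeries ℚ) ^ (2 * (q ^ 2 - 1)) *
          ((1 - (PowerSeries.X : PowerSeries ℚ) ^ (q ^ 2 - 1))⁻¹ *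
            (1 - (PowerSeries.X : PowerSeries ℚ) ^ (q ^ 2 - q))⁻¹) := by
  subst hcard
  have hq' : 0 < Fintype.card Fq - 1 := Nat.sub_pos_of_lt Fintype.one_lt_card
  rw [← GLCofixed.mk_finrank_homogeneousInvariants_top,
    GLCofixed.X_pow_mul_inv_one_sub_X_pow hq'.ne' 2]
  ext d
  rw [hilbQuot, PowerSeries.coeff_mk, GLCofixed.finrank_quotient_NG, map_add, map_add,
    PowerSeries.coeff_X_pow_mul', PowerSeries.coeff_mk, PowerSeries.coeff_mk,
    PowerSeries.coeff_one]
  push_cast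
  congr 1
  rcases eq_or_ne d 0 with rfl | hd
  · rw [if_pos (.inl rfl), if_pos rfl, if_neg (by lia), add_zero]
  · simp only [hd, false_or, if_false, zero_add]
end
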